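/- arXiv:1705.02993 — 2 statements merged into one kernel-verified Lean document; each statement's English description precedes it below -/
import Mathlib

section
/- Fix an integer d ≥ 2. There exist constants α > 0, β > 0 and C > 0, depending only on d, such that for every real p ≥ 2 and every Borel probability measure ν on ℝ supported in [−2d, 2d], if |∫ x^m dν(x) − ∫ x^m f_{2d}(x) dx| ≤ p^{−β} for every integer m with 1 ≤ m ≤ α·log(p), then D(ν, f_{2d}) ≤ C / log(p). -/
open MeasureTheory

noncomputable section

abbrev SL (n p : ℕ) := Matrix.SpecialLinearGroup (Fin n) (ZMod p)

/-- Density of the Kesten–McKay law with parameter `2d`. -/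
noncomputable def kmDensity (d : ℕ) (x : ℝ) : ℝ :=
  if x ^ 2 ≤ 4 * (2 * (d : ℝ) - 1) then
    2 * d * Real.sqrt (4 * (2 * (d : ℝ) - 1) - x ^ 2) /
      (2 * Real.pi * ((2 * (d : ℝ)) ^ 2 - x ^ 2))
  else 0

/-- The Kesten–McKay law with parameter `2d`, as a measure on `ℝ`. -/
noncomputable def kestenMcKay (d : ℕ) : Measure ℝ :=
  MeasureTheory.volume.withDensity fun x => ENNReal.ofReal (kmDensity d x)

/-- Discrepancy between two measures on ℝ. -/
noncomputable def discrepancy (ν μ : Measure ℝ) : ℝ :=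
  sSup {r : ℝ | ∃ a b : ℝ, a ≤ b ∧
    r = |(ν (Set.Icc a b)).toReal - (μ (Set.Icc a b)).toReal|}

/-- The element of the free group on `d` generators given by a word of length `m`. -/
def wordProd {d m : ℕ} (w : Fin m → Fin d × Bool) : FreeGroup (Fin d) :=
  (List.ofFn fun j => if (w j).2 then FreeGroup.of (w j).1 else (FreeGroup.of (w j).1)⁻¹).prod

/-- Evaluation of a word of length `m` in `d` letters at a tuple `S`. -/
def wordEval {G : Type*} [Group G] {d m : ℕ} (S : Fin d → G) (w : Fin m → Fin d × Bool) : G :=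
  (List.ofFn fun j => if (w j).2 then S (w j).1 else (S (w j).1)⁻¹).prod

/-- `N(d,m)`: the number of trivial words of length `m` in `d` letters. -/
noncomputable def Ntriv (d m : ℕ) : ℕ :=
  Nat.card {w : Fin m → Fin d × Bool // wordProd w = 1}

/-- `A_{π,S} = Σᵢ (π gᵢ + (π gᵢ)⁻¹)`. -/
noncomputable def Amat {G : Type*} [Group G] {n d : ℕ}
    (π : G →* Matrix.unitaryGroup (Fin n) ℂ) (S : Fin d → G) : Matrix (Fin n) (Fin n) ℂ :=
  ∑ i, ((π (S i) : Matrix (Fin n) (Fin n) ℂ) + ((π (S i))⁻¹ : Matrix (Fin n) (Fin n) ℂ))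

/-- Spectral probability measure of a Hermitian matrix. -/
noncomputable def specMeasure {n : ℕ} (A : Matrix (Fin n) (Fin n) ℂ) : Measure ℝ := by
  classical
  exact if hA : A.IsHermitian then
    (n : ENNReal)⁻¹ • ∑ j : Fin n, Measure.dirac (hA.eigenvalues j) else 0

/-- A unitary representation is irreducible if the only invariant subspaces are `⊥` and `⊤`. -/
def IsIrreducibleRep {G : Type*} [Group G] {n : ℕ}
    (π : G →* Matrix.unitaryGroup (Fin n) ℂ) : Prop :=
  ∀ W : Submodule ℂ (Fin n → ℂ),
    (∀ g : G, ∀ v ∈ W, (π g : Matrix (Fin n) (Fin n) ℂ).mulVec v ∈ W) → W = ⊥ ∨ W = ⊤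

/-- Number of eigenvalues of a Hermitian matrix with `|λ| > t`, with multiplicity. -/
noncomputable def excCount {n : ℕ} (A : Matrix (Fin n) (Fin n) ℂ) (t : ℝ) : ℕ := by
  classical
  exact if hA : A.IsHermitian then
    (Finset.univ.filter fun j : Fin n => t < |hA.eigenvalues j|).card else 0

end

/-! It suffices to bound `ν` from above on half-lines: passing to complements yields the lower
bounds, and an interval is the intersection of two half-lines. If a polynomial `P` lies above the
indicator of a half-line `E` on the support, then `ν E ≤ ∫ P dν ≈ ∫ P dμ ≤ μ E + B δ`, where `B`
bounds the density of `μ`, `δ` is the integral excess of `P` over the indicator, and the error in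
`≈` is the moment tolerance times the sum of the absolute values of the coefficients of `P`.

For `E = [0, ∞)` on `[-1, 1]`, let `P` be the antiderivative of `-x G(x)` with `P(-1) = 0` and
`P(1) = 1`, where `G ≥ 0`. It increases from `0` up to the origin and then decreases to `1`, so it
is a majorant, and integration by parts gives `δ = ∫ x² G / ∫ (-x) G`. With `q = T_n(x) / x` for
`n` odd, the bump `q⁶` has width `1 / n`, but being even it has `∫ (-x) q⁶ = 0`; the factor
`(1 - n x)²` in `G = (1 - n x)² q⁶` makes the mean negative at the scale of the bump, whence
`δ = O(1 / n)`. Degree `O(n)` and coefficients of size `exp(O(n))` make `n ≈ log p` the right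
choice.

The total mass of the Kesten–McKay law comes from the antiderivative
`arcsin (x / s) - (c / r) arcsin (c x / (s √(r² - x²)))` of `√(s² - x²) / (r² - x²)`, where
`r² = s² + c²`; here `r = 2d`, `s = 2√(2d - 1)` and `c = 2d - 2`. -/

open Polynomial Set
open scoped NNReal

section L1Norm

variable {R : Type*} [SeminormedRing R]

/-- The `ℓ¹`-norm of the coefficient sequence of a polynomial. It bounds the change of `∫ P` when
every moment of the measure changes by at most a given amount. -/
noncomputable def l1Norm (p : R[X]) : ℝ := p.sum fun _ a => ‖a‖

lemma l1Norm_eq_sum {p : R[X]} {s : Finset ℕ} (hs : p.support ⊆ s) :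
    l1Norm p = ∑ i ∈ s, ‖p.coeff i‖ :=
  p.sum_eq_of_subset _ (fun _ => norm_zero) hs

lemma l1Norm_nonneg (p : R[X]) : 0 ≤ l1Norm p := Finset.sum_nonneg fun _ _ => norm_nonneg _

lemma l1Norm_monomial (n : ℕ) (a : R) : l1Norm (monomial n a) = ‖a‖ :=
  sum_monomial_index a _ norm_zero

lemma l1Norm_C (a : R) : l1Norm (C a) = ‖a‖ := l1Norm_monomial 0 a

lemma l1Norm_zero : l1Norm (0 : R[X]) = 0 := sum_zero_index _

lemma l1Norm_neg (p : R[X]) : l1Norm (-p) = l1Norm p := by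
  simp only [l1Norm, Polynomial.sum, support_neg, coeff_neg, norm_neg]

lemma l1Norm_add_le (p q : R[X]) : l1Norm (p + q) ≤ l1Norm p + l1Norm q := by
  classical
  rw [l1Norm_eq_sum (support_add (p := p) (q := q)),
    l1Norm_eq_sum (p := p) Finset.subset_union_left,
    l1Norm_eq_sum (p := q) Finset.subset_union_right, ← Finset.sum_add_distrib]
  gcongr with i
  rw [coeff_add]
  exact norm_add_le _ _

lemma l1Norm_sub_le (p q : R[X]) : l1Norm (p - q) ≤ l1Norm p + l1Norm q := by
  rw [sub_eq_add_neg, ← l1Norm_neg q]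
  exact l1Norm_add_le _ _

lemma l1Norm_sum_le {ι : Type*} (s : Finset ι) (f : ι → R[X]) :
    l1Norm (∑ i ∈ s, f i) ≤ ∑ i ∈ s, l1Norm (f i) :=
  Finset.le_sum_of_subadditive l1Norm l1Norm_zero.le l1Norm_add_le s f

lemma l1Norm_mul_le (p q : R[X]) : l1Norm (p * q) ≤ l1Norm p * l1Norm q := by
  rw [mul_eq_sum_sum]
  calc l1Norm (∑ i ∈ p.support, q.sum fun j a => monomial (i + j) (p.coeff i * a))
      ≤ ∑ i ∈ p.support, ∑ j ∈ q.support, ‖p.coeff i * q.coeff j‖ := by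
        refine (l1Norm_sum_le _ _).trans ?_
        gcongr with i
        refine (l1Norm_sum_le _ _).trans_eq ?_
        simp only [l1Norm_monomial]
    _ ≤ ∑ i ∈ p.support, ∑ j ∈ q.support, ‖p.coeff i‖ * ‖q.coeff j‖ := by
        gcongr
        exact norm_mul_le _ _
    _ = l1Norm p * l1Norm q := (Finset.sum_mul_sum _ _ _ _).symm

lemma l1Norm_eq_sum_range {p : R[X]} {n : ℕ} (hn : p.natDegree < n) :
    l1Norm p = ∑ i ∈ Finset.range n, ‖p.coeff i‖ :=
  p.sum_over_range' (fun _ => norm_zero) n hn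

lemma l1Norm_divX_le (p : R[X]) : l1Norm p.divX ≤ l1Norm p := by
  rw [l1Norm_eq_sum_range (Nat.lt_succ_of_le p.natDegree_divX_le),
    l1Norm_eq_sum_range (by omega : p.natDegree < p.natDegree + 1 + 1),
    Finset.sum_range_succ' _ (p.natDegree + 1)]
  simp only [coeff_divX]
  exact le_add_of_nonneg_right (norm_nonneg _)

section NormOneClass

variable [NormOneClass R]

lemma l1Norm_one : l1Norm (1 : R[X]) = 1 := by rw [← C_1, l1Norm_C, norm_one]

lemma l1Norm_X : l1Norm (X : R[X]) = 1 := by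
  rw [← monomial_one_one_eq_X, l1Norm_monomial, norm_one]

lemma l1Norm_pow_le (p : R[X]) (n : ℕ) : l1Norm (p ^ n) ≤ l1Norm p ^ n := by
  induction n with
  | zero => rw [pow_zero, pow_zero, l1Norm_one]
  | succ n ih =>
    rw [pow_succ, pow_succ]
    exact (l1Norm_mul_le _ _).trans (mul_le_mul_of_nonneg_right ih (l1Norm_nonneg p))

lemma l1Norm_comp_le (p : R[X]) {q : R[X]} (hq : l1Norm q ≤ 1) :
    l1Norm (p.comp q) ≤ l1Norm p := by
  rw [comp_eq_sum_left]
  refine (l1Norm_sum_le _ _).trans (Finset.sum_le_sum fun i _ => ?_)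
  calc l1Norm (C (p.coeff i) * q ^ i) ≤ l1Norm (C (p.coeff i)) * l1Norm q ^ i :=
        (l1Norm_mul_le _ _).trans
          (mul_le_mul_of_nonneg_left (l1Norm_pow_le q i) (l1Norm_nonneg _))
    _ ≤ ‖p.coeff i‖ := by
        rw [l1Norm_C]
        exact mul_le_of_le_one_right (norm_nonneg _) (pow_le_one₀ (l1Norm_nonneg q) hq)

lemma norm_eval_le_l1Norm (p : R[X]) {x : R} (hx : ‖x‖ ≤ 1) : ‖p.eval x‖ ≤ l1Norm p := by
  rw [eval_eq_sum]
  refine (norm_sum_le _ _).trans (Finset.sum_le_sum fun i _ => ?_)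
  calc ‖p.coeff i * x ^ i‖ ≤ ‖p.coeff i‖ * ‖x‖ ^ i :=
        (norm_mul_le _ _).trans (mul_le_mul_of_nonneg_left (norm_pow_le x i) (norm_nonneg _))
    _ ≤ ‖p.coeff i‖ :=
        mul_le_of_le_one_right (norm_nonneg _) (pow_le_one₀ (norm_nonneg x) hx)

end NormOneClass

lemma l1Norm_T_le {R : Type*} [SeminormedCommRing R] [NormOneClass R] :
    ∀ n : ℕ, l1Norm (Chebyshev.T R n) ≤ 3 ^ n
  | 0 => by simp [l1Norm_one]
  | 1 => by simp [l1Norm_X]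
  | n + 2 => by
    have h_two_X : l1Norm (2 * X : R[X]) ≤ 2 := by
      have := l1Norm_add_le (X : R[X]) X
      rw [l1Norm_X] at this
      rw [two_mul]
      linarith
    have h_rec : Chebyshev.T R ((n + 2 : ℕ) : ℤ) =
        2 * X * Chebyshev.T R ((n + 1 : ℕ) : ℤ) - Chebyshev.T R n := by
      push_cast
      exact Chebyshev.T_add_two R n
    rw [h_rec]
    calc l1Norm (2 * X * Chebyshev.T R ((n + 1 : ℕ) : ℤ) - Chebyshev.T R n)
        ≤ l1Norm (2 * X : R[X]) * l1Norm (Chebyshev.T R ((n + 1 : ℕ) : ℤ)) +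
            l1Norm (Chebyshev.T R n) := by
          grw [l1Norm_sub_le, l1Norm_mul_le (2 * X)]
      _ ≤ 2 * 3 ^ (n + 1) + 3 ^ n := by
          gcongr
          exacts [l1Norm_nonneg _, l1Norm_T_le (n + 1), l1Norm_T_le n]
      _ ≤ 3 ^ (n + 2) := by
          have : (0 : ℝ) < 3 ^ n := by positivity
          rw [pow_succ, pow_add]
          linarith

end L1Norm

section Antiderivative

variable {𝕜 : Type*} [RCLike 𝕜]

/-- The formal antiderivative of a polynomial, with zero constant term. -/
noncomputable def antiderivative (p : 𝕜[X]) : 𝕜[X] :=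
  p.sum fun i a => monomial (i + 1) (a / (i + 1))

lemma derivative_antiderivative (p : 𝕜[X]) : derivative (antiderivative p) = p := by
  conv_rhs => rw [p.as_sum_support]
  rw [antiderivative, Polynomial.sum, derivative_sum]
  refine Finset.sum_congr rfl fun i _ => ?_
  have hi : (i : 𝕜) + 1 ≠ 0 := Nat.cast_add_one_ne_zero i
  rw [derivative_monomial, Nat.add_sub_cancel, Nat.cast_add_one, div_mul_cancel₀ _ hi]

lemma natDegree_antiderivative_le (p : 𝕜[X]) :
    (antiderivative p).natDegree ≤ p.natDegree + 1 :=
  natDegree_sum_le_of_forall_le _ _ fun _ hi =>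
    (natDegree_monomial_le _).trans (Nat.succ_le_succ (le_natDegree_of_mem_supp _ hi))

lemma l1Norm_antiderivative_le (p : 𝕜[X]) : l1Norm (antiderivative p) ≤ l1Norm p := by
  refine (l1Norm_sum_le _ _).trans (Finset.sum_le_sum fun i _ => ?_)
  have hi : ‖(i : 𝕜) + 1‖ = i + 1 := by exact_mod_cast RCLike.norm_natCast (K := 𝕜) (i + 1)
  rw [l1Norm_monomial, norm_div, hi]
  exact div_le_self (norm_nonneg _) (le_add_of_nonneg_left i.cast_nonneg)

end Antiderivative

section ChebyshevQuotient

lemma abs_sin_natCast_mul_le (n : ℕ) (φ : ℝ) : |Real.sin (n * φ)| ≤ n * |Real.sin φ| := by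
  induction n with
  | zero => simp
  | succ n ih =>
    rw [Nat.cast_add_one, add_one_mul, add_one_mul, Real.sin_add]
    calc |Real.sin (n * φ) * Real.cos φ + Real.cos (n * φ) * Real.sin φ|
        ≤ |Real.sin (n * φ)| * |Real.cos φ| + |Real.cos (n * φ)| * |Real.sin φ| := by
          rw [← abs_mul, ← abs_mul]
          exact abs_add_le _ _
      _ ≤ |Real.sin (n * φ)| * 1 + 1 * |Real.sin φ| := by
          gcongr
          exacts [Real.abs_cos_le_one φ, Real.abs_cos_le_one _]
      _ ≤ n * |Real.sin φ| + |Real.sin φ| := by linarith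

lemma abs_eval_T_eq_abs_sin_arcsin {n : ℕ} (hn : Odd n) {x : ℝ} (hx : |x| ≤ 1) :
    |(Chebyshev.T ℝ n).eval x| = |Real.sin (n * Real.arcsin x)| := by
  obtain ⟨hx₁, hx₂⟩ := abs_le.mp hx
  obtain ⟨k, rfl⟩ := hn
  have h_angle : ((2 * k + 1 : ℕ) : ℝ) * (Real.pi / 2 - Real.arcsin x) =
      Real.pi / 2 - (2 * k + 1 : ℕ) * Real.arcsin x + k * Real.pi := by
    push_cast
    ring
  conv_lhs => rw [← Real.cos_arccos hx₁ hx₂]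
  rw [Chebyshev.T_real_cos, Int.cast_natCast, Real.arccos, h_angle, Real.cos_add_nat_mul_pi,
    Real.cos_pi_div_two_sub, abs_mul, abs_neg_one_pow, one_mul]

lemma abs_eval_T_le_mul_abs {n : ℕ} (hn : Odd n) {x : ℝ} (hx : |x| ≤ 1) :
    |(Chebyshev.T ℝ n).eval x| ≤ n * |x| := by
  obtain ⟨hx₁, hx₂⟩ := abs_le.mp hx
  have := abs_sin_natCast_mul_le n (Real.arcsin x)
  rwa [Real.sin_arcsin hx₁ hx₂, ← abs_eval_T_eq_abs_sin_arcsin hn hx] at this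

lemma mul_abs_le_abs_eval_T {n : ℕ} (hn : Odd n) {x : ℝ} (hx : n * |x| ≤ 1) :
    n / 2 * |x| ≤ |(Chebyshev.T ℝ n).eval x| := by
  have hn_one : (1 : ℝ) ≤ n := by exact_mod_cast hn.pos
  have hx_one : |x| ≤ 1 := (le_mul_of_one_le_left (abs_nonneg x) hn_one).trans hx
  obtain ⟨hx₁, hx₂⟩ := abs_le.mp hx_one
  set φ := Real.arcsin x
  have h_sin : Real.sin φ = x := Real.sin_arcsin hx₁ hx₂
  have hφ_le : |φ| ≤ Real.pi / 2 := abs_le.mpr (Real.arcsin_mem_Icc x)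
  have h_jordan : 2 / Real.pi * |φ| ≤ |x| := h_sin ▸ Real.mul_abs_le_abs_sin hφ_le
  have hx_le : |x| ≤ |φ| := h_sin ▸ Real.abs_sin_le_abs
  have h_nφ : |n * φ| = n * |φ| := by rw [abs_mul, Nat.abs_cast]
  have h_nφ_le : |n * φ| ≤ Real.pi / 2 := by
    have : 2 / Real.pi * |n * φ| ≤ 1 := by
      rw [h_nφ, mul_left_comm]
      exact (mul_le_mul_of_nonneg_left h_jordan n.cast_nonneg).trans hx
    rwa [div_mul_eq_mul_div, div_le_one Real.pi_pos, ← le_div_iff₀' two_pos] at this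
  calc n / 2 * |x| = 1 / 2 * (n * |x|) := by ring
    _ ≤ 2 / Real.pi * (n * |φ|) := by
        have : 1 / 2 ≤ 2 / Real.pi := by
          rw [div_le_div_iff₀ two_pos Real.pi_pos]
          linarith [Real.pi_le_four]
        gcongr
    _ ≤ |Real.sin (n * φ)| := h_nφ ▸ Real.mul_abs_le_abs_sin h_nφ_le
    _ = |(Chebyshev.T ℝ n).eval x| := (abs_eval_T_eq_abs_sin_arcsin hn hx_one).symm

/-- The polynomial `T_n(x) / x` for odd `n`: an even polynomial which is of size `n` for
`|x| ≤ 1 / n` and decays like `1 / |x|` on the rest of `[-1, 1]`. -/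
noncomputable def chebyshevQuotient (n : ℕ) : ℝ[X] := (Chebyshev.T ℝ n).divX

lemma natDegree_chebyshevQuotient (n : ℕ) : (chebyshevQuotient n).natDegree = n - 1 := by
  rw [chebyshevQuotient, natDegree_divX_eq_natDegree_tsub_one, Chebyshev.natDegree_T,
    Int.natAbs_natCast]

lemma l1Norm_chebyshevQuotient_le (n : ℕ) : l1Norm (chebyshevQuotient n) ≤ 3 ^ n :=
  (l1Norm_divX_le _).trans (l1Norm_T_le n)

variable {n : ℕ}

lemma mul_eval_chebyshevQuotient (hn : Odd n) (x : ℝ) :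
    x * (chebyshevQuotient n).eval x = (Chebyshev.T ℝ n).eval x := by
  have h_coeff : (Chebyshev.T ℝ n).coeff 0 = 0 := by
    rw [coeff_zero_eq_eval_zero, Chebyshev.T_eval_zero_of_odd ℝ (mod_cast hn)]
  have := congrArg (eval x) (X_mul_divX_add (Chebyshev.T ℝ n))
  rwa [h_coeff, map_zero, add_zero, eval_mul, eval_X] at this

lemma eval_neg_chebyshevQuotient (hn : Odd n) (x : ℝ) :
    (chebyshevQuotient n).eval (-x) = (chebyshevQuotient n).eval x := by
  obtain rfl | hx := eq_or_ne x 0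
  · rw [neg_zero]
  · have h_odd : (Chebyshev.T ℝ n).eval (-x) = -(Chebyshev.T ℝ n).eval x := by
      rw [Chebyshev.T_eval_neg, Int.negOnePow_odd _ (mod_cast hn)]
      simp
    rw [← mul_eval_chebyshevQuotient hn, ← mul_eval_chebyshevQuotient hn, neg_mul,
      neg_inj] at h_odd
    exact mul_left_cancel₀ hx h_odd

lemma abs_mul_eval_chebyshevQuotient_le_one (hn : Odd n) {x : ℝ} (hx : |x| ≤ 1) :
    |x * (chebyshevQuotient n).eval x| ≤ 1 := by
  rw [mul_eval_chebyshevQuotient hn]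
  exact Chebyshev.abs_eval_T_real_le_one n hx

lemma abs_eval_chebyshevQuotient_le (hn : Odd n) {x : ℝ} (hx : |x| ≤ 1) (hx₀ : x ≠ 0) :
    |(chebyshevQuotient n).eval x| ≤ n := by
  have := abs_eval_T_le_mul_abs hn hx
  rw [← mul_eval_chebyshevQuotient hn, abs_mul, mul_comm] at this
  exact le_of_mul_le_mul_right this (abs_pos.mpr hx₀)

lemma le_abs_eval_chebyshevQuotient (hn : Odd n) {x : ℝ} (hx : n * |x| ≤ 1) (hx₀ : x ≠ 0) :
    n / 2 ≤ |(chebyshevQuotient n).eval x| := by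
  have := mul_abs_le_abs_eval_T hn hx
  rw [← mul_eval_chebyshevQuotient hn, abs_mul, mul_comm |x|] at this
  exact le_of_mul_le_mul_right this (abs_pos.mpr hx₀)

end ChebyshevQuotient

section TiltedBump

lemma integral_eq_zero_of_odd {E : Type*} [NormedAddCommGroup E] [NormedSpace ℝ E] {f : ℝ → E}
    (hf : ∀ x, f (-x) = -f x) (a : ℝ) : ∫ x in -a..a, f x = 0 := by
  have h_reflect : ∫ x in -a..a, f (-x) = ∫ x in -a..a, f x := by
    rw [intervalIntegral.integral_comp_neg, neg_neg]
  have : IsAddTorsionFree E := .of_isTorsionFree ℝ E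
  simp only [hf, intervalIntegral.integral_neg] at h_reflect
  exact neg_eq_self.mp h_reflect

lemma integral_inv_one_add_mul_sq_le {N : ℝ} (hN : 0 < N) (a b : ℝ) :
    ∫ x in a..b, (1 + (N * x) ^ 2)⁻¹ ≤ 4 / N := by
  rw [intervalIntegral.integral_comp_mul_left (fun u : ℝ => (1 + u ^ 2)⁻¹) hN.ne',
    integral_inv_one_add_sq, smul_eq_mul, div_eq_inv_mul]
  gcongr
  linarith [Real.arctan_lt_pi_div_two (N * b), Real.neg_pi_div_two_lt_arctan (N * a),
    Real.pi_le_four]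

/-- The kernel `(1 - n x)² q(x)⁶`, where `q` is `chebyshevQuotient n`: a nonnegative bump
concentrated on `|x| ≲ 1 / n`, tilted so that its mean is negative. -/
noncomputable def tiltedBump (n : ℕ) : ℝ[X] :=
  (1 - C (n : ℝ) * X) ^ 2 * chebyshevQuotient n ^ 6

lemma eval_tiltedBump (n : ℕ) (x : ℝ) :
    (tiltedBump n).eval x = (1 - n * x) ^ 2 * (chebyshevQuotient n).eval x ^ 6 := by
  simp only [tiltedBump, eval_mul, eval_pow, eval_sub, eval_one, eval_C, eval_X]

lemma eval_tiltedBump_nonneg (n : ℕ) (x : ℝ) : 0 ≤ (tiltedBump n).eval x := by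
  rw [eval_tiltedBump]
  positivity

lemma natDegree_tiltedBump_le (n : ℕ) : (tiltedBump n).natDegree ≤ 2 + 6 * (n - 1) := by
  have h_lin : (1 - C (n : ℝ) * X).natDegree ≤ 1 := by compute_degree
  exact natDegree_mul_le_of_le (natDegree_pow_le_of_le 2 h_lin)
    (natDegree_pow_le_of_le 6 (natDegree_chebyshevQuotient n).le)

lemma l1Norm_tiltedBump_le (n : ℕ) : l1Norm (tiltedBump n) ≤ (1 + n) ^ 2 * 3 ^ (6 * n) := by
  have h_lin : l1Norm (1 - C (n : ℝ) * X) ≤ 1 + n := by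
    grw [l1Norm_sub_le, l1Norm_mul_le, l1Norm_one, l1Norm_C, l1Norm_X, mul_one,
      Real.norm_natCast]
  calc l1Norm (tiltedBump n)
      ≤ l1Norm (1 - C (n : ℝ) * X) ^ 2 * l1Norm (chebyshevQuotient n) ^ 6 :=
        (l1Norm_mul_le _ _).trans <|
          mul_le_mul (l1Norm_pow_le _ 2) (l1Norm_pow_le _ 6) (l1Norm_nonneg _)
            (pow_nonneg (l1Norm_nonneg _) 2)
    _ ≤ (1 + n) ^ 2 * (3 ^ n) ^ 6 := by
        gcongr
        exacts [l1Norm_nonneg _, l1Norm_nonneg _, l1Norm_chebyshevQuotient_le n]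
    _ = (1 + n) ^ 2 * 3 ^ (6 * n) := by rw [← pow_mul, mul_comm n 6]

variable {n : ℕ}

lemma sq_mul_eval_tiltedBump_le (hn : Odd n) {x : ℝ} (hx : |x| ≤ 1) :
    x ^ 2 * (tiltedBump n).eval x ≤ 8 * n ^ 4 * (1 + (n * x) ^ 2)⁻¹ := by
  obtain rfl | hx₀ := eq_or_ne x 0
  · rw [zero_pow two_ne_zero, zero_mul]
    positivity
  rw [← div_eq_mul_inv, le_div_iff₀ (by positivity), eval_tiltedBump]
  have h_xq := (sq_le_one_iff_abs_le_one _).mpr (abs_mul_eval_chebyshevQuotient_le_one hn hx)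
  have h_q : (chebyshevQuotient n).eval x ^ 2 ≤ (n : ℝ) ^ 2 :=
    sq_le_sq.mpr ((abs_eval_chebyshevQuotient_le hn hx hx₀).trans (le_abs_self _))
  generalize (chebyshevQuotient n).eval x = q at *
  generalize (n : ℝ) = N at *
  have h_peak : x ^ 2 * q ^ 6 ≤ N ^ 4 := by
    calc x ^ 2 * q ^ 6 = (x * q) ^ 2 * (q ^ 2) ^ 2 := by ring
      _ ≤ 1 * (N ^ 2) ^ 2 := by gcongr
      _ = N ^ 4 := by ring
  have h_decay : (N * x) ^ 4 * (x ^ 2 * q ^ 6) ≤ N ^ 4 := by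
    calc (N * x) ^ 4 * (x ^ 2 * q ^ 6) = N ^ 4 * ((x * q) ^ 2) ^ 3 := by ring
      _ ≤ N ^ 4 * 1 ^ 3 := by gcongr
      _ = N ^ 4 := by ring
  calc x ^ 2 * ((1 - N * x) ^ 2 * q ^ 6) * (1 + (N * x) ^ 2)
      = ((1 - N * x) ^ 2 * (1 + (N * x) ^ 2)) * (x ^ 2 * q ^ 6) := by ring
    _ ≤ (4 * (1 + (N * x) ^ 4)) * (x ^ 2 * q ^ 6) := by
        refine mul_le_mul_of_nonneg_right ?_ (by positivity)
        have h_tilt : (1 - N * x) ^ 2 ≤ 2 * (1 + (N * x) ^ 2) := by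
          linarith [sq_nonneg (1 + N * x)]
        have h_sq : (1 + (N * x) ^ 2) ^ 2 ≤ 2 * (1 + (N * x) ^ 4) := by
          linarith [sq_nonneg (1 - (N * x) ^ 2)]
        linarith [mul_le_mul_of_nonneg_right h_tilt (by positivity : 0 ≤ 1 + (N * x) ^ 2)]
    _ ≤ 8 * N ^ 4 := by linarith

lemma integral_sq_mul_tiltedBump_le (hn : Odd n) :
    ∫ x in (-1 : ℝ)..1, x ^ 2 * (tiltedBump n).eval x ≤ 32 * n ^ 3 := by
  have hn_pos : (0 : ℝ) < n := by exact_mod_cast hn.pos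
  have h_cont : Continuous fun x : ℝ => 8 * (n : ℝ) ^ 4 * (1 + (n * x) ^ 2)⁻¹ :=
    continuous_const.mul (Continuous.inv₀ (by fun_prop) fun x => by positivity)
  calc ∫ x in (-1 : ℝ)..1, x ^ 2 * (tiltedBump n).eval x
      ≤ ∫ x in (-1 : ℝ)..1, 8 * (n : ℝ) ^ 4 * (1 + (n * x) ^ 2)⁻¹ :=
        intervalIntegral.integral_mono_on (by norm_num)
          (Continuous.intervalIntegrable (by fun_prop) _ _) (h_cont.intervalIntegrable _ _)
          fun x hx => sq_mul_eval_tiltedBump_le hn (abs_le.mpr hx)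
    _ ≤ 8 * n ^ 4 * (4 / n) := by
        rw [intervalIntegral.integral_const_mul]
        gcongr
        exact integral_inv_one_add_mul_sq_le hn_pos _ _
    _ = 32 * n ^ 3 := by
        field_simp
        norm_num

lemma integral_neg_mul_tiltedBump_eq (hn : Odd n) :
    ∫ x in (-1 : ℝ)..1, -x * (tiltedBump n).eval x =
      2 * n * ∫ x in (-1 : ℝ)..1, x ^ 2 * (chebyshevQuotient n).eval x ^ 6 := by
  have h_odd : ∫ x in (-1 : ℝ)..1, -x * (1 + (n * x) ^ 2) * (chebyshevQuotient n).eval x ^ 6 = 0 :=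
    integral_eq_zero_of_odd (fun x => by rw [eval_neg_chebyshevQuotient hn]; ring) 1
  calc ∫ x in (-1 : ℝ)..1, -x * (tiltedBump n).eval x
      = ∫ x in (-1 : ℝ)..1, (2 * n * (x ^ 2 * (chebyshevQuotient n).eval x ^ 6) +
          -x * (1 + (n * x) ^ 2) * (chebyshevQuotient n).eval x ^ 6) := by
        refine intervalIntegral.integral_congr fun x _ => ?_
        simp only [eval_tiltedBump]
        ring
    _ = 2 * n * ∫ x in (-1 : ℝ)..1, x ^ 2 * (chebyshevQuotient n).eval x ^ 6 := by
        rw [intervalIntegral.integral_add (Continuous.intervalIntegrable (by fun_prop) _ _)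
          (Continuous.intervalIntegrable (by fun_prop) _ _), h_odd, add_zero,
          intervalIntegral.integral_const_mul]

lemma le_integral_neg_mul_tiltedBump (hn : Odd n) :
    n ^ 4 / 96 ≤ ∫ x in (-1 : ℝ)..1, -x * (tiltedBump n).eval x := by
  have hn_pos : (0 : ℝ) < n := by exact_mod_cast hn.pos
  have hn_inv : (n : ℝ)⁻¹ ≤ 1 := inv_le_one_of_one_le₀ (by exact_mod_cast hn.pos)
  have h_peak : ∀ x ∈ Icc 0 (n : ℝ)⁻¹,
      x ^ 2 * (n / 2) ^ 6 ≤ x ^ 2 * (chebyshevQuotient n).eval x ^ 6 := by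
    rintro x ⟨hx₀, hx⟩
    obtain rfl | hx_pos := hx₀.eq_or_lt
    · simp
    have hnx : n * |x| ≤ 1 := by
      rwa [abs_of_pos hx_pos, ← le_inv_mul_iff₀ hn_pos, mul_one]
    rw [← Even.pow_abs ⟨3, rfl⟩ ((chebyshevQuotient n).eval x)]
    gcongr
    exact le_abs_eval_chebyshevQuotient hn hnx hx_pos.ne'
  rw [integral_neg_mul_tiltedBump_eq hn]
  calc (n : ℝ) ^ 4 / 96 ≤ 2 * n * ∫ x in (0 : ℝ)..(n : ℝ)⁻¹, x ^ 2 * (n / 2) ^ 6 := by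
        rw [intervalIntegral.integral_mul_const, integral_pow]
        refine le_of_eq ?_
        ring_nf
        field_simp
    _ ≤ 2 * n * ∫ x in (0 : ℝ)..(n : ℝ)⁻¹, x ^ 2 * (chebyshevQuotient n).eval x ^ 6 := by
        gcongr
        exact intervalIntegral.integral_mono_on (by positivity)
          (Continuous.intervalIntegrable (by fun_prop) _ _)
          (Continuous.intervalIntegrable (by fun_prop) _ _) h_peak
    _ ≤ 2 * n * ∫ x in (-1 : ℝ)..1, x ^ 2 * (chebyshevQuotient n).eval x ^ 6 := by
        gcongr
        exact intervalIntegral.integral_mono_interval (by norm_num) (by positivity) hn_inv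
          (Filter.Eventually.of_forall fun x => by dsimp only [Pi.zero_apply]; positivity)
          (Continuous.intervalIntegrable (by fun_prop) _ _)

end TiltedBump

section Majorant

/-- The polynomial `P` majorizes the indicator function of `E` on `[-L, L]`, with integral excess
at most `δ`: the one-sided approximation through which moments control the measure of `E`. The set
`E` is meant to be measurable, since otherwise the integral is the junk value `0`. -/
structure IsMajorantOn (E : Set ℝ) (L δ : ℝ) (P : ℝ[X]) : Prop where
  indicator_le : ∀ x ∈ Icc (-L) L, E.indicator 1 x ≤ P.eval x
  integral_sub_le : ∫ x in -L..L, (P.eval x - E.indicator 1 x) ≤ δ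

lemma integrable_indicator_one {μ : Measure ℝ} [IsFiniteMeasure μ] {E : Set ℝ}
    (hE : MeasurableSet E) : Integrable (E.indicator (1 : ℝ → ℝ)) μ :=
  (integrable_const (1 : ℝ)).indicator hE

lemma intervalIntegrable_indicator_one {E : Set ℝ} (hE : MeasurableSet E) (a b : ℝ) :
    IntervalIntegrable (E.indicator (1 : ℝ → ℝ)) volume a b :=
  ⟨integrable_indicator_one hE, integrable_indicator_one hE⟩

namespace IsMajorantOn

variable {E : Set ℝ} {L δ : ℝ} {P : ℝ[X]}

lemma mono {δ' : ℝ} (h : IsMajorantOn E L δ P) (hδ : δ ≤ δ') : IsMajorantOn E L δ' P :=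
  ⟨h.indicator_le, h.integral_sub_le.trans hδ⟩

lemma of_subset (hL : 0 ≤ L) (hE : Icc (-L) L ⊆ E) : IsMajorantOn E L 0 1 where
  indicator_le x hx := by rw [indicator_of_mem (hE hx), eval_one, Pi.one_apply]
  integral_sub_le := by
    refine (intervalIntegral.integral_zero_ae (ae_of_all _ fun x hx => ?_)).le
    rw [uIoc_of_le (neg_le_self hL)] at hx
    rw [indicator_of_mem (hE (Ioc_subset_Icc_self hx)), eval_one, Pi.one_apply, sub_self]

lemma of_disjoint (hL : 0 ≤ L) (hE : Disjoint (Icc (-L) L) E) : IsMajorantOn E L 0 0 where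
  indicator_le x hx := by rw [indicator_of_notMem (hE.notMem_of_mem_left hx), eval_zero]
  integral_sub_le := by
    refine (intervalIntegral.integral_zero_ae (ae_of_all _ fun x hx => ?_)).le
    rw [uIoc_of_le (neg_le_self hL)] at hx
    rw [indicator_of_notMem (hE.notMem_of_mem_left (Ioc_subset_Icc_self hx)), eval_zero,
      sub_self]

lemma integral_sub_nonneg (h : IsMajorantOn E L δ P) (hL : 0 ≤ L) :
    0 ≤ ∫ x in -L..L, (P.eval x - E.indicator 1 x) :=
  intervalIntegral.integral_nonneg (neg_le_self hL) fun x hx =>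
    sub_nonneg.mpr (h.indicator_le x hx)

lemma nonneg (h : IsMajorantOn E L δ P) (hL : 0 ≤ L) : 0 ≤ δ :=
  (h.integral_sub_nonneg hL).trans h.integral_sub_le

lemma intervalIntegrable_sub (hE : MeasurableSet E) (P : ℝ[X]) (a b : ℝ) :
    IntervalIntegrable (fun x => P.eval x - E.indicator 1 x) volume a b :=
  (P.continuous.intervalIntegrable a b).sub (intervalIntegrable_indicator_one hE a b)

lemma comp_affine {M c b : ℝ} (h : IsMajorantOn E M δ P) (hE : MeasurableSet E) (hL : 0 ≤ L)
    (hc : c ≠ 0) (hM : |c| * L + |b| ≤ M) :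
    IsMajorantOn {x | c * x + b ∈ E} L (δ / |c|) (P.comp (C c * X + C b)) := by
  have h_eval (x : ℝ) : (P.comp (C c * X + C b)).eval x = P.eval (c * x + b) := by
    simp only [eval_comp, eval_add, eval_mul, eval_C, eval_X]
  have h_maps {x : ℝ} (hx : x ∈ Icc (-L) L) : c * x + b ∈ Icc (-M) M := by
    refine abs_le.mp (((abs_add_le _ _).trans ?_).trans hM)
    rw [abs_mul]
    gcongr
    exact abs_le.mpr hx
  have hM_nonneg : 0 ≤ M := le_trans (by positivity) hM
  refine ⟨fun x hx => h_eval x ▸ h.indicator_le _ (h_maps hx), ?_⟩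
  set g : ℝ → ℝ := fun y => P.eval y - E.indicator 1 y
  have h_range : uIoc (c * -L + b) (c * L + b) ⊆ uIoc (-M) M := by
    rw [uIoc_of_le (neg_le_self hM_nonneg)]
    exact Ioc_subset_Ioc (le_min (h_maps ⟨le_rfl, by linarith⟩).1 (h_maps ⟨by linarith, le_rfl⟩).1)
      (max_le (h_maps ⟨le_rfl, by linarith⟩).2 (h_maps ⟨by linarith, le_rfl⟩).2)
  calc ∫ x in -L..L, ((P.comp (C c * X + C b)).eval x - indicator {x | c * x + b ∈ E} 1 x)
      = ∫ x in -L..L, g (c * x + b) :=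
        intervalIntegral.integral_congr fun x _ => congrArg (· - _) (h_eval x)
    _ ≤ |∫ x in -L..L, g (c * x + b)| := le_abs_self _
    _ = |∫ y in c * -L + b..c * L + b, g y| / |c| := by
        rw [intervalIntegral.integral_comp_mul_add g hc, smul_eq_mul, abs_mul, abs_inv,
          inv_mul_eq_div]
    _ ≤ |∫ y in -M..M, g y| / |c| := by
        refine div_le_div_of_nonneg_right ?_ (abs_nonneg c)
        refine intervalIntegral.abs_integral_mono_interval h_range ?_
          (intervalIntegrable_sub hE P _ _)
        rw [uIoc_of_le (neg_le_self hM_nonneg)]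
        exact (ae_restrict_mem measurableSet_Ioc).mono fun y hy =>
          sub_nonneg.mpr (h.indicator_le y (Ioc_subset_Icc_self hy))
    _ ≤ δ / |c| := by
        rw [abs_of_nonneg (h.integral_sub_nonneg hM_nonneg)]
        gcongr
        exact h.integral_sub_le

end IsMajorantOn

lemma integral_indicator_Ici_zero : ∫ x in (-1 : ℝ)..1, (Ici (0 : ℝ)).indicator 1 x = (1 : ℝ) := by
  have h_inter : Ici (0 : ℝ) ∩ Ioc (-1) 1 = Icc 0 1 := by
    ext x
    exact ⟨fun h => ⟨h.1, h.2.2⟩, fun h => ⟨h.1, by linarith [h.1], h.2⟩⟩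
  rw [intervalIntegral.integral_of_le (by norm_num), integral_indicator_one measurableSet_Ici,
    measureReal_restrict_apply measurableSet_Ici, h_inter, Real.volume_real_Icc_of_le zero_le_one,
    sub_zero]

lemma integral_eval_of_derivative_eq_neg_X_mul {P G : ℝ[X]} (hP : derivative P = -X * G) :
    ∫ x in (-1 : ℝ)..1, P.eval x =
      P.eval 1 + P.eval (-1) + ∫ x in (-1 : ℝ)..1, x ^ 2 * G.eval x := by
  have h_deriv (x : ℝ) : HasDerivAt (fun x => x * P.eval x) (P.eval x - x ^ 2 * G.eval x) x := by
    refine ((hasDerivAt_id x).mul (P.hasDerivAt x)).congr_deriv ?_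
    rw [hP, eval_mul, eval_neg, eval_X, id_eq]
    ring
  have h_ftc := intervalIntegral.integral_eq_sub_of_hasDerivAt (fun x _ => h_deriv x)
    (Continuous.intervalIntegrable (by fun_prop) (-1) 1)
  rw [intervalIntegral.integral_sub (P.continuous.intervalIntegrable _ _)
    (Continuous.intervalIntegrable (by fun_prop) _ _)] at h_ftc
  linarith

lemma isMajorantOn_of_derivative_eq_neg_X_mul {P G : ℝ[X]} (hG : ∀ x, 0 ≤ G.eval x)
    (hP : derivative P = -X * G) (h_left : P.eval (-1) = 0) (h_right : P.eval 1 = 1) :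
    IsMajorantOn (Ici 0) 1 (∫ x in (-1 : ℝ)..1, x ^ 2 * G.eval x) P := by
  have h_deriv (x : ℝ) : deriv (fun x => P.eval x) x = -x * G.eval x := by
    rw [P.deriv, hP, eval_mul, eval_neg, eval_X]
  have h_mono : MonotoneOn (fun x => P.eval x) (Icc (-1) 0) := by
    refine monotoneOn_of_deriv_nonneg (convex_Icc _ _) P.continuousOn
      P.differentiable.differentiableOn fun x hx => ?_
    rw [interior_Icc] at hx
    rw [h_deriv]
    exact mul_nonneg (neg_nonneg.mpr hx.2.le) (hG x)
  have h_anti : AntitoneOn (fun x => P.eval x) (Icc 0 1) := by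
    refine antitoneOn_of_deriv_nonpos (convex_Icc _ _) P.continuousOn
      P.differentiable.differentiableOn fun x hx => ?_
    rw [interior_Icc] at hx
    rw [h_deriv]
    exact mul_nonpos_of_nonpos_of_nonneg (neg_nonpos.mpr hx.1.le) (hG x)
  constructor
  · rintro x ⟨hx₁, hx₂⟩
    rcases lt_or_ge x 0 with hx | hx
    · rw [indicator_of_notMem (notMem_Ici.mpr hx), ← h_left]
      exact h_mono (left_mem_Icc.mpr (by norm_num)) ⟨hx₁, hx.le⟩ hx₁
    · rw [indicator_of_mem (mem_Ici.mpr hx), Pi.one_apply, ← h_right]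
      exact h_anti ⟨hx, hx₂⟩ (right_mem_Icc.mpr zero_le_one) hx₂
  · rw [intervalIntegral.integral_sub (P.continuous.intervalIntegrable _ _)
      (intervalIntegrable_indicator_one measurableSet_Ici _ _),
      integral_eval_of_derivative_eq_neg_X_mul hP, integral_indicator_Ici_zero, h_left, h_right]
    linarith

/-- The antiderivative of `-x G(x)` normalized to run from `0` at `-1` to `1` at `1`. If `G` is a
bump around `0`, it is a majorant of the indicator function of `[0, ∞)` on `[-1, 1]`. -/
noncomputable def stepMajorant (G : ℝ[X]) : ℝ[X] :=
  C (∫ x in (-1 : ℝ)..1, -x * G.eval x)⁻¹ *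
    (antiderivative (-X * G) - C ((antiderivative (-X * G)).eval (-1)))

lemma derivative_stepMajorant (G : ℝ[X]) :
    derivative (stepMajorant G) = -X * (C (∫ x in (-1 : ℝ)..1, -x * G.eval x)⁻¹ * G) := by
  rw [stepMajorant, derivative_C_mul, derivative_sub, derivative_C, sub_zero,
    derivative_antiderivative]
  ring

lemma eval_neg_one_stepMajorant (G : ℝ[X]) : (stepMajorant G).eval (-1) = 0 := by
  rw [stepMajorant, eval_mul, eval_sub, eval_C, eval_C, sub_self, mul_zero]

lemma eval_one_stepMajorant {G : ℝ[X]} (hG : ∫ x in (-1 : ℝ)..1, -x * G.eval x ≠ 0) :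
    (stepMajorant G).eval 1 = 1 := by
  have h_deriv (x : ℝ) :
      HasDerivAt (fun x => (antiderivative (-X * G)).eval x) (-x * G.eval x) x := by
    have := (antiderivative (-X * G)).hasDerivAt x
    rwa [derivative_antiderivative, eval_mul, eval_neg, eval_X] at this
  rw [stepMajorant, eval_mul, eval_sub, eval_C, eval_C,
    ← intervalIntegral.integral_eq_sub_of_hasDerivAt (fun x _ => h_deriv x)
      (Continuous.intervalIntegrable (by fun_prop) (-1) 1), inv_mul_cancel₀ hG]

lemma natDegree_stepMajorant_le (G : ℝ[X]) : (stepMajorant G).natDegree ≤ G.natDegree + 2 := by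
  refine (natDegree_C_mul_le _ _).trans ?_
  rw [natDegree_sub_C]
  refine (natDegree_antiderivative_le _).trans ?_
  grw [natDegree_mul_le, natDegree_neg, natDegree_X]
  omega

lemma l1Norm_stepMajorant_le (G : ℝ[X]) :
    l1Norm (stepMajorant G) ≤ |∫ x in (-1 : ℝ)..1, -x * G.eval x|⁻¹ * (2 * l1Norm G) := by
  have h_anti : l1Norm (antiderivative (-X * G)) ≤ l1Norm G := by
    grw [l1Norm_antiderivative_le, l1Norm_mul_le, l1Norm_neg, l1Norm_X, one_mul]
  have h_const : ‖(antiderivative (-X * G)).eval (-1)‖ ≤ l1Norm G :=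
    (norm_eval_le_l1Norm _ (by simp)).trans h_anti
  refine (l1Norm_mul_le _ _).trans ?_
  rw [l1Norm_C, norm_inv, Real.norm_eq_abs, two_mul]
  gcongr
  grw [l1Norm_sub_le, l1Norm_C, h_anti, h_const]

lemma isMajorantOn_stepMajorant {G : ℝ[X]} (hG : ∀ x, 0 ≤ G.eval x)
    (hG' : 0 < ∫ x in (-1 : ℝ)..1, -x * G.eval x) :
    IsMajorantOn (Ici 0) 1
      ((∫ x in (-1 : ℝ)..1, x ^ 2 * G.eval x) / ∫ x in (-1 : ℝ)..1, -x * G.eval x)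
      (stepMajorant G) := by
  refine (isMajorantOn_of_derivative_eq_neg_X_mul (fun x => ?_) (derivative_stepMajorant G)
    (eval_neg_one_stepMajorant G) (eval_one_stepMajorant hG'.ne')).mono (le_of_eq ?_)
  · rw [eval_mul, eval_C]
    exact mul_nonneg (inv_nonneg.mpr hG'.le) (hG x)
  · simp only [eval_mul, eval_C, mul_left_comm _ (_⁻¹ : ℝ), intervalIntegral.integral_const_mul]
    exact inv_mul_eq_div _ _

lemma exists_isMajorantOn_Ici_zero {n : ℕ} (hn : Odd n) :
    ∃ P : ℝ[X], IsMajorantOn (Ici 0) 1 (3072 / n) P ∧ P.natDegree ≤ 6 * n ∧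
      l1Norm P ≤ 768 * 3 ^ (6 * n) := by
  have hn_one : (1 : ℝ) ≤ n := by exact_mod_cast hn.pos
  have h_first := le_integral_neg_mul_tiltedBump hn
  have h_pos : (0 : ℝ) < n ^ 4 / 96 := by positivity
  refine ⟨stepMajorant (tiltedBump n), ?_, ?_, ?_⟩
  · refine (isMajorantOn_stepMajorant (eval_tiltedBump_nonneg n)
      (h_pos.trans_le h_first)).mono ?_
    calc _ ≤ 32 * (n : ℝ) ^ 3 / (n ^ 4 / 96) := by
          gcongr
          exact integral_sq_mul_tiltedBump_le hn
      _ = 3072 / n := by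
          field_simp
          norm_num
  · have := natDegree_tiltedBump_le n
    have := natDegree_stepMajorant_le (tiltedBump n)
    have := hn.pos
    omega
  · calc l1Norm (stepMajorant (tiltedBump n))
        ≤ (n ^ 4 / 96 : ℝ)⁻¹ * (2 * ((n + n) ^ 2 * 3 ^ (6 * n))) := by
          grw [l1Norm_stepMajorant_le, l1Norm_tiltedBump_le, ← le_abs_self, ← h_first]
          · gcongr
          · exact h_pos.trans_le h_first
      _ = 768 * 3 ^ (6 * n) / n ^ 2 := by
          field_simp
          norm_num
      _ ≤ 768 * 3 ^ (6 * n) := div_le_self (by positivity) (one_le_pow₀ hn_one)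

section Rays

variable {P : ℝ[X]} {δ L : ℝ}

lemma exists_isMajorantOn_setOf_nonneg (hP : IsMajorantOn (Ici 0) 1 δ P) (hL : 1 ≤ L) {c : ℝ}
    (hc : |c| * (2 * L) = 1) (b : ℝ) :
    ∃ Q : ℝ[X], IsMajorantOn {x | 0 ≤ c * x + b} L (2 * L * δ) Q ∧
      Q.natDegree ≤ P.natDegree ∧ l1Norm Q ≤ l1Norm P := by
  have hL₀ : 0 ≤ L := zero_le_one.trans hL
  have hδ : 0 ≤ 2 * L * δ := mul_nonneg (by positivity) (hP.nonneg zero_le_one)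
  have hc_le : |c| ≤ 1 / 2 := by nlinarith [abs_nonneg c]
  have h_small {x : ℝ} (hx : x ∈ Icc (-L) L) : |c * x| ≤ 1 / 2 := by
    rw [abs_mul]
    grw [abs_le.mpr hx]
    linarith
  rcases le_or_gt |b| (1 / 2) with hb | hb
  · refine ⟨P.comp (C c * X + C b), (hP.comp_affine measurableSet_Ici hL₀ ?_ ?_).mono ?_, ?_, ?_⟩
    · rintro rfl
      simp at hc
    · linarith
    · rw [div_eq_inv_mul, inv_eq_of_mul_eq_one_right hc]
    · exact natDegree_comp_le.trans
        (mul_le_of_le_one_right (Nat.zero_le _) natDegree_linear_le)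
    · refine l1Norm_comp_le P ?_
      grw [l1Norm_add_le, l1Norm_mul_le, l1Norm_C, l1Norm_C, l1Norm_X, mul_one, Real.norm_eq_abs,
        Real.norm_eq_abs]
      linarith
  rcases lt_abs.mp hb with hb | hb
  · have h_all : Icc (-L) L ⊆ {x | 0 ≤ c * x + b} := fun x hx => by
      rw [mem_ofPred]
      linarith [neg_abs_le (c * x), h_small hx]
    refine ⟨1, (IsMajorantOn.of_subset hL₀ h_all).mono hδ, by simp, ?_⟩
    have h_one := hP.indicator_le 1 (right_mem_Icc.mpr (by norm_num))
    rw [indicator_of_mem (mem_Ici.mpr zero_le_one), Pi.one_apply] at h_one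
    rw [l1Norm_one]
    exact (h_one.trans (le_abs_self _)).trans (norm_eval_le_l1Norm P norm_one.le)
  · have h_none : Disjoint (Icc (-L) L) {x | 0 ≤ c * x + b} :=
      disjoint_left.mpr fun x hx hx' => by
        linarith [le_abs_self (c * x), h_small hx, mem_ofPred.mp hx']
    exact ⟨0, (IsMajorantOn.of_disjoint hL₀ h_none).mono hδ, by simp,
      l1Norm_zero.trans_le (l1Norm_nonneg P)⟩

lemma exists_isMajorantOn_Ici (hP : IsMajorantOn (Ici 0) 1 δ P) (hL : 1 ≤ L) (t : ℝ) :
    ∃ Q : ℝ[X], IsMajorantOn (Ici t) L (2 * L * δ) Q ∧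
      Q.natDegree ≤ P.natDegree ∧ l1Norm Q ≤ l1Norm P := by
  have hL_pos : 0 < 2 * L := by linarith
  convert exists_isMajorantOn_setOf_nonneg hP hL (c := (2 * L)⁻¹)
    (by rw [abs_of_pos (inv_pos.mpr hL_pos), inv_mul_cancel₀ hL_pos.ne']) ((2 * L)⁻¹ * -t) using 4
  ext x
  rw [mem_Ici, mem_ofPred, ← mul_add, mul_nonneg_iff_of_pos_left (inv_pos.mpr hL_pos),
    ← sub_eq_add_neg, sub_nonneg]

lemma exists_isMajorantOn_Iic (hP : IsMajorantOn (Ici 0) 1 δ P) (hL : 1 ≤ L) (t : ℝ) :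
    ∃ Q : ℝ[X], IsMajorantOn (Iic t) L (2 * L * δ) Q ∧
      Q.natDegree ≤ P.natDegree ∧ l1Norm Q ≤ l1Norm P := by
  have hL_pos : 0 < 2 * L := by linarith
  convert exists_isMajorantOn_setOf_nonneg hP hL (c := -(2 * L)⁻¹)
    (by rw [abs_neg, abs_of_pos (inv_pos.mpr hL_pos), inv_mul_cancel₀ hL_pos.ne'])
    ((2 * L)⁻¹ * t) using 4
  ext x
  rw [mem_Iic, mem_ofPred, neg_mul_comm, ← mul_add, mul_nonneg_iff_of_pos_left (inv_pos.mpr hL_pos),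
    neg_add_eq_sub, sub_nonneg]

end Rays

end Majorant

section Discrepancy

section Rays

variable {α : Type*} [LinearOrder α] [TopologicalSpace α] [OrderClosedTopology α]
  [MeasurableSpace α] [OpensMeasurableSpace α] {ν μ : Measure α} [IsProbabilityMeasure ν]

lemma measureReal_Icc_add_one {a b : α} (hab : a ≤ b) :
    ν.real (Icc a b) + 1 = ν.real (Ici a) + ν.real (Iic b) := by
  have h_union : Ici a ∪ Iic b = univ :=
    eq_univ_of_forall fun x => (le_total a x).imp_right fun h => h.trans hab
  rw [← measureReal_union_add_inter measurableSet_Iic, Ici_inter_Iic, h_union, probReal_univ,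
    add_comm]

variable [IsProbabilityMeasure μ] [NullSingletonClass μ] {η : ℝ} {t : α}

lemma measureReal_Ici_le_add_of_Iic (h : ν.real (Iic t) ≤ μ.real (Iic t) + η) :
    μ.real (Ici t) ≤ ν.real (Ici t) + η := by
  have h_mono : ν.real (Iio t) ≤ ν.real (Iic t) := measureReal_mono Iio_subset_Iic_self
  rw [← compl_Iio, probReal_compl_eq_one_sub measurableSet_Iio,
    probReal_compl_eq_one_sub measurableSet_Iio, measureReal_congr (μ := μ) Iio_ae_eq_Iic]
  linarith

lemma measureReal_Iic_le_add_of_Ici (h : ν.real (Ici t) ≤ μ.real (Ici t) + η) :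
    μ.real (Iic t) ≤ ν.real (Iic t) + η := by
  have h_mono : ν.real (Ioi t) ≤ ν.real (Ici t) := measureReal_mono Ioi_subset_Ici_self
  rw [← compl_Ioi, probReal_compl_eq_one_sub measurableSet_Ioi,
    probReal_compl_eq_one_sub measurableSet_Ioi, measureReal_congr (μ := μ) Ioi_ae_eq_Ici]
  linarith

end Rays

variable {ν μ : Measure ℝ}

lemma discrepancy_le_of_rays [IsProbabilityMeasure ν] [IsProbabilityMeasure μ]
    [NullSingletonClass μ] {η : ℝ} (h_Ici : ∀ t, ν.real (Ici t) ≤ μ.real (Ici t) + η)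
    (h_Iic : ∀ t, ν.real (Iic t) ≤ μ.real (Iic t) + η) : discrepancy ν μ ≤ 2 * η := by
  refine csSup_le ⟨_, 0, 0, le_rfl, rfl⟩ ?_
  rintro r ⟨a, b, hab, rfl⟩
  change |ν.real (Icc a b) - μ.real (Icc a b)| ≤ 2 * η
  have hν := measureReal_Icc_add_one (ν := ν) hab
  have hμ := measureReal_Icc_add_one (ν := μ) hab
  have h_Ici' := measureReal_Ici_le_add_of_Iic (h_Iic a)
  have h_Iic' := measureReal_Iic_le_add_of_Ici (h_Ici b)
  rw [abs_le]
  constructor <;> linarith [h_Ici a, h_Iic b]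

lemma integrable_of_continuous_of_measure_compl_eq_zero {X E : Type*} [TopologicalSpace X]
    [T2Space X] [MeasurableSpace X] [OpensMeasurableSpace X] [NormedAddCommGroup E]
    {ρ : Measure X} [IsFiniteMeasureOnCompacts ρ] {K : Set X} (hK : IsCompact K)
    (hρ : ρ Kᶜ = 0) {f : X → E} (hf : Continuous f) : Integrable f ρ := by
  have h := hf.continuousOn.integrableOn_compact (μ := ρ) hK
  rwa [IntegrableOn, Measure.restrict_eq_self_of_ae_mem (mem_ae_iff.mpr hρ)] at h

variable {L : ℝ}

lemma integral_eval_eq_sum {ρ : Measure ℝ} [IsFiniteMeasure ρ] (hρ : ρ (Icc (-L) L)ᶜ = 0)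
    (P : ℝ[X]) : ∫ x, P.eval x ∂ρ = ∑ i ∈ P.support, P.coeff i * ∫ x, x ^ i ∂ρ := by
  simp only [eval_eq_sum, Polynomial.sum]
  rw [integral_finsetSum _ fun i _ =>
    integrable_of_continuous_of_measure_compl_eq_zero isCompact_Icc hρ (by fun_prop)]
  simp only [integral_const_mul]

lemma abs_integral_eval_sub_le [IsProbabilityMeasure ν] [IsProbabilityMeasure μ]
    (hν : ν (Icc (-L) L)ᶜ = 0) (hμ : μ (Icc (-L) L)ᶜ = 0) {ε : ℝ} (hε : 0 ≤ ε) (P : ℝ[X])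
    (h_moments : ∀ m : ℕ, 1 ≤ m → m ≤ P.natDegree →
      |(∫ x, x ^ m ∂ν) - ∫ x, x ^ m ∂μ| ≤ ε) :
    |(∫ x, P.eval x ∂ν) - ∫ x, P.eval x ∂μ| ≤ ε * l1Norm P := by
  have h_moments' (i : ℕ) (hi : i ∈ P.support) : |(∫ x, x ^ i ∂ν) - ∫ x, x ^ i ∂μ| ≤ ε := by
    obtain rfl | hi_pos := Nat.eq_zero_or_pos i
    · simpa using hε
    · exact h_moments i hi_pos (le_natDegree_of_mem_supp i hi)
  rw [integral_eval_eq_sum hν, integral_eval_eq_sum hμ, ← Finset.sum_sub_distrib, l1Norm,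
    Polynomial.sum, Finset.mul_sum]
  refine (Finset.abs_sum_le_sum_abs _ _).trans (Finset.sum_le_sum fun i hi => ?_)
  rw [← mul_sub, abs_mul, mul_comm, Real.norm_eq_abs]
  exact mul_le_mul_of_nonneg_right (h_moments' i hi) (abs_nonneg _)

namespace IsMajorantOn

variable {E : Set ℝ} {δ : ℝ} {P : ℝ[X]}

lemma measureReal_le_integral [IsFiniteMeasure ν] (h : IsMajorantOn E L δ P)
    (hE : MeasurableSet E) (hν : ν (Icc (-L) L)ᶜ = 0) : ν.real E ≤ ∫ x, P.eval x ∂ν := by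
  have h_ae : ∀ᵐ x ∂ν, x ∈ Icc (-L) L := hν
  rw [← integral_indicator_one hE]
  exact integral_mono_ae (integrable_indicator_one hE)
    (integrable_of_continuous_of_measure_compl_eq_zero isCompact_Icc hν P.continuous)
    (h_ae.mono h.indicator_le)

lemma integral_le_measureReal_add [IsFiniteMeasure μ] {B : ℝ≥0} (h : IsMajorantOn E L δ P)
    (hE : MeasurableSet E) (hL : 0 ≤ L) (hμ : μ (Icc (-L) L)ᶜ = 0)
    (hμB : μ ≤ B • volume.restrict (Icc (-L) L)) : ∫ x, P.eval x ∂μ ≤ μ.real E + B * δ := by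
  have h_int : Integrable (fun x => P.eval x - E.indicator 1 x)
      (B • volume.restrict (Icc (-L) L)) :=
    ((P.continuous.continuousOn.integrableOn_Icc).sub
      (integrable_indicator_one hE)).smul_measure_nnreal
  have h_nonneg : 0 ≤ᵐ[B • volume.restrict (Icc (-L) L)] fun x => P.eval x - E.indicator 1 x :=
    Measure.ae_smul_measure ((ae_restrict_mem measurableSet_Icc).mono fun x hx =>
      sub_nonneg.mpr (h.indicator_le x hx)) _
  rw [← sub_le_iff_le_add', ← integral_indicator_one hE, ← integral_sub
    (integrable_of_continuous_of_measure_compl_eq_zero isCompact_Icc hμ P.continuous)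
    (integrable_indicator_one hE)]
  refine (integral_mono_measure hμB h_nonneg h_int).trans ?_
  rw [integral_smul_nnreal_measure, NNReal.smul_def, smul_eq_mul, integral_Icc_eq_integral_Ioc,
    ← intervalIntegral.integral_of_le (neg_le_self hL)]
  gcongr
  exact h.integral_sub_le

lemma measureReal_le_add [IsProbabilityMeasure ν] [IsProbabilityMeasure μ] {B : ℝ≥0} {ε : ℝ}
    (h : IsMajorantOn E L δ P) (hE : MeasurableSet E) (hL : 0 ≤ L) (hν : ν (Icc (-L) L)ᶜ = 0)
    (hμ : μ (Icc (-L) L)ᶜ = 0) (hμB : μ ≤ B • volume.restrict (Icc (-L) L)) (hε : 0 ≤ ε)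
    (h_moments : ∀ m : ℕ, 1 ≤ m → m ≤ P.natDegree →
      |(∫ x, x ^ m ∂ν) - ∫ x, x ^ m ∂μ| ≤ ε) :
    ν.real E ≤ μ.real E + (B * δ + ε * l1Norm P) := by
  have h_ν := h.measureReal_le_integral hE hν
  have h_μ := h.integral_le_measureReal_add hE hL hμ hμB
  linarith [(abs_le.mp (abs_integral_eval_sub_le hν hμ hε P h_moments)).2]

end IsMajorantOn

lemma discrepancy_le_of_moments [IsProbabilityMeasure ν] [IsProbabilityMeasure μ] {B : ℝ≥0}
    {n : ℕ} (hn : Odd n) {ε : ℝ} (hε : 0 ≤ ε) (hL : 1 ≤ L) (hν : ν (Icc (-L) L)ᶜ = 0)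
    (hμB : μ ≤ B • volume.restrict (Icc (-L) L))
    (h_moments : ∀ m : ℕ, 1 ≤ m → m ≤ 6 * n → |(∫ x, x ^ m ∂ν) - ∫ x, x ^ m ∂μ| ≤ ε) :
    discrepancy ν μ ≤ 2 * (B * (2 * L * (3072 / n)) + ε * (768 * 3 ^ (6 * n))) := by
  have hL₀ : 0 ≤ L := zero_le_one.trans hL
  have h_ac : μ ≪ volume.restrict (Icc (-L) L) := Measure.absolutelyContinuous_of_le_smul hμB
  have : NullSingletonClass μ := ⟨fun x => h_ac (measure_singleton x)⟩
  have hμ : μ (Icc (-L) L)ᶜ = 0 :=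
    h_ac (Measure.restrict_apply_eq_zero measurableSet_Icc.compl |>.mpr (by simp))
  obtain ⟨P, hP, hP_deg, hP_norm⟩ := exists_isMajorantOn_Ici_zero hn
  have h_ray {E : Set ℝ} {Q : ℝ[X]} (hE : MeasurableSet E)
      (hQ : IsMajorantOn E L (2 * L * (3072 / n)) Q) (hQ_deg : Q.natDegree ≤ P.natDegree)
      (hQ_norm : l1Norm Q ≤ l1Norm P) :
      ν.real E ≤ μ.real E + (B * (2 * L * (3072 / n)) + ε * (768 * 3 ^ (6 * n))) := by
    refine (hQ.measureReal_le_add hE hL₀ hν hμ hμB hε fun m hm₁ hm₂ =>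
      h_moments m hm₁ (hm₂.trans (hQ_deg.trans hP_deg))).trans ?_
    gcongr
    exact hQ_norm.trans hP_norm
  refine discrepancy_le_of_rays (fun t => ?_) fun t => ?_
  · obtain ⟨Q, hQ, hQ_deg, hQ_norm⟩ := exists_isMajorantOn_Ici hP hL t
    exact h_ray measurableSet_Ici hQ hQ_deg hQ_norm
  · obtain ⟨Q, hQ, hQ_deg, hQ_norm⟩ := exists_isMajorantOn_Iic hP hL t
    exact h_ray measurableSet_Iic hQ hQ_deg hQ_norm

end Discrepancy

section KestenMcKay

lemma hasDerivAt_arcsin_comp {f : ℝ → ℝ} {f' w x : ℝ} (hf : HasDerivAt f f' x) (hw : 0 < w)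
    (h_circle : f x ^ 2 + w ^ 2 = 1) : HasDerivAt (fun y => Real.arcsin (f y)) (f' / w) x := by
  have h_abs : |f x| < 1 := (sq_lt_one_iff_abs_lt_one _).mp (by nlinarith)
  have h_sqrt : √(1 - f x ^ 2) = w := by
    rw [← h_circle, add_sub_cancel_left, Real.sqrt_sq hw.le]
  have h := (Real.hasDerivAt_arcsin (abs_lt.mp h_abs).1.ne' (abs_lt.mp h_abs).2.ne).comp x hf
  rwa [h_sqrt, one_div_mul_eq_div] at h

section SemicircleQuotient

variable {r s c : ℝ}

lemma hasDerivAt_div_sqrt_sq_sub_sq {x : ℝ} (hx : 0 < r ^ 2 - x ^ 2) :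
    HasDerivAt (fun y => y / √(r ^ 2 - y ^ 2)) (r ^ 2 / √(r ^ 2 - x ^ 2) ^ 3) x := by
  have h_pos := Real.sqrt_pos.mpr hx
  have h_sq := Real.sq_sqrt hx.le
  have h_sqrt := (((hasDerivAt_id x).pow 2).const_sub (r ^ 2)).sqrt hx.ne'
  refine ((hasDerivAt_id x).div h_sqrt h_pos.ne').congr_deriv ?_
  simp only [id, Pi.pow_apply, Nat.cast_ofNat] at h_pos h_sq ⊢
  field_simp
  linear_combination h_sq

lemma hasDerivAt_semicircle_quotient_primitive (hr : 0 < r) (hs : 0 < s)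
    (h_pyth : s ^ 2 + c ^ 2 = r ^ 2) {x : ℝ} (hx : x ∈ Ioo (-s) s) :
    HasDerivAt
      (fun y => Real.arcsin (y / s) - c / r * Real.arcsin (c / s * (y / √(r ^ 2 - y ^ 2))))
      (√(s ^ 2 - x ^ 2) / (r ^ 2 - x ^ 2)) x := by
  have hu : 0 < s ^ 2 - x ^ 2 := sub_pos.mpr (sq_lt_sq' hx.1 hx.2)
  have hv : 0 < r ^ 2 - x ^ 2 := by nlinarith [sq_nonneg c]
  have hu_sq := Real.sq_sqrt hu.le
  have hv_sq := Real.sq_sqrt hv.le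
  have hv_deriv := (hasDerivAt_div_sqrt_sq_sub_sq hv).const_mul (c / s)
  have hu_pos := Real.sqrt_pos.mpr hu
  have hv_pos := Real.sqrt_pos.mpr hv
  rw [← hv_sq]
  set u := √(s ^ 2 - x ^ 2)
  set v := √(r ^ 2 - x ^ 2)
  have h_first : HasDerivAt (fun y => Real.arcsin (y / s)) (1 / s / (u / s)) x :=
    hasDerivAt_arcsin_comp ((hasDerivAt_id x).div_const s) (by positivity)
      (by field_simp; linarith)
  have h_second := hasDerivAt_arcsin_comp (w := r * u / (s * v)) hv_deriv (by positivity)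
    (by
      field_simp
      linear_combination v ^ 2 * (x ^ 2 * h_pyth + r ^ 2 * hu_sq - s ^ 2 * hv_sq))
  refine (h_first.sub (h_second.const_mul (c / r))).congr_deriv ?_
  field_simp
  linear_combination hv_sq - hu_sq - h_pyth

lemma continuousOn_semicircle_quotient (hsr : s ^ 2 < r ^ 2) :
    ContinuousOn (fun x => √(s ^ 2 - x ^ 2) / (r ^ 2 - x ^ 2)) (Icc (-s) s) :=
  ContinuousOn.div (by fun_prop) (by fun_prop) fun x hx => by
    linarith [sq_le_sq' hx.1 hx.2]

lemma integral_semicircle_quotient (hr : 0 < r) (hs : 0 < s) (hc : 0 < c)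
    (h_pyth : s ^ 2 + c ^ 2 = r ^ 2) :
    ∫ x in (-s)..s, √(s ^ 2 - x ^ 2) / (r ^ 2 - x ^ 2) = Real.pi * (1 - c / r) := by
  have hsr : s ^ 2 < r ^ 2 := by nlinarith
  have h_cont : ContinuousOn
      (fun y => Real.arcsin (y / s) - c / r * Real.arcsin (c / s * (y / √(r ^ 2 - y ^ 2))))
      (Icc (-s) s) := by
    have h_div : ContinuousOn (fun y => y / √(r ^ 2 - y ^ 2)) (Icc (-s) s) :=
      ContinuousOn.div (by fun_prop) (by fun_prop) fun y hy =>
        (Real.sqrt_pos.mpr (by linarith [sq_le_sq' hy.1 hy.2])).ne'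
    fun_prop
  have h_end : √(r ^ 2 - s ^ 2) = c := by
    rw [← h_pyth, add_sub_cancel_left, Real.sqrt_sq hc.le]
  have h_ratio : c / s * (s / c) = 1 := by field_simp
  rw [intervalIntegral.integral_eq_sub_of_hasDerivAt_of_le (neg_le_self hs.le) h_cont
    (fun x hx => hasDerivAt_semicircle_quotient_primitive hr hs h_pyth hx)
    ((continuousOn_semicircle_quotient hsr).intervalIntegrable_of_Icc (neg_le_self hs.le))]
  simp only [neg_sq, h_end, neg_div, mul_neg, div_self hs.ne', h_ratio, Real.arcsin_neg,
    Real.arcsin_one]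
  ring

end SemicircleQuotient

variable {d : ℕ}

/-- The right endpoint `2√(2d - 1)` of the support of the Kesten–McKay law. -/
noncomputable def kmRadius (d : ℕ) : ℝ := √(4 * (2 * d - 1))

lemma kmRadius_sq (hd : 1 ≤ d) : kmRadius d ^ 2 = 4 * (2 * d - 1) := by
  have hd' : (1 : ℝ) ≤ d := by exact_mod_cast hd
  exact Real.sq_sqrt (by linarith)

lemma kmRadius_pos (hd : 1 ≤ d) : 0 < kmRadius d := by
  have hd' : (1 : ℝ) ≤ d := by exact_mod_cast hd
  exact Real.sqrt_pos.mpr (by linarith)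

lemma kmRadius_sq_add_sq (hd : 1 ≤ d) :
    kmRadius d ^ 2 + (2 * d - 2) ^ 2 = (2 * d : ℝ) ^ 2 := by
  rw [kmRadius_sq hd]
  ring

lemma kmRadius_sq_lt (hd : 2 ≤ d) : kmRadius d ^ 2 < (2 * d : ℝ) ^ 2 := by
  have hd' : (2 : ℝ) ≤ d := by exact_mod_cast hd
  rw [← kmRadius_sq_add_sq (one_le_two.trans hd)]
  nlinarith

lemma kmDensity_eq_indicator (hd : 1 ≤ d) :
    kmDensity d = (Icc (-kmRadius d) (kmRadius d)).indicator fun x =>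
      d / Real.pi * (√(kmRadius d ^ 2 - x ^ 2) / ((2 * d) ^ 2 - x ^ 2)) := by
  funext x
  have h_mem : x ∈ Icc (-kmRadius d) (kmRadius d) ↔ x ^ 2 ≤ 4 * (2 * (d : ℝ) - 1) := by
    rw [← kmRadius_sq hd, sq_le_sq, abs_of_pos (kmRadius_pos hd), abs_le, mem_Icc]
  rw [kmDensity, indicator_apply, kmRadius_sq hd]
  simp only [h_mem]
  congr 1
  field_simp

lemma kestenMcKay_eq_withDensity_restrict (hd : 1 ≤ d) :
    kestenMcKay d = (volume.restrict (Icc (-kmRadius d) (kmRadius d))).withDensity fun x =>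
      ENNReal.ofReal (d / Real.pi * (√(kmRadius d ^ 2 - x ^ 2) / ((2 * d) ^ 2 - x ^ 2))) := by
  rw [kestenMcKay, kmDensity_eq_indicator hd, ← withDensity_indicator measurableSet_Icc]
  congr 1
  funext x
  exact congrFun (indicator_comp_of_zero ENNReal.ofReal_zero) x |>.symm

lemma isProbabilityMeasure_kestenMcKay (hd : 2 ≤ d) : IsProbabilityMeasure (kestenMcKay d) := by
  have hd₁ : 1 ≤ d := one_le_two.trans hd
  have hd' : (2 : ℝ) ≤ d := by exact_mod_cast hd
  have h_cont := (continuousOn_semicircle_quotient (kmRadius_sq_lt hd)).const_mul (d / Real.pi)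
  have h_nonneg : ∀ x ∈ Icc (-kmRadius d) (kmRadius d),
      0 ≤ d / Real.pi * (√(kmRadius d ^ 2 - x ^ 2) / ((2 * d : ℝ) ^ 2 - x ^ 2)) := fun x hx => by
    have h_den : 0 ≤ (2 * d : ℝ) ^ 2 - x ^ 2 :=
      sub_nonneg.mpr ((sq_le_sq' hx.1 hx.2).trans (kmRadius_sq_lt hd).le)
    positivity
  constructor
  rw [kestenMcKay_eq_withDensity_restrict hd₁, withDensity_apply _ MeasurableSet.univ,
    Measure.restrict_univ, ← ofReal_integral_eq_lintegral_ofReal h_cont.integrableOn_Icc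
      (ae_restrict_of_forall_mem measurableSet_Icc h_nonneg),
    integral_Icc_eq_integral_Ioc,
    ← intervalIntegral.integral_of_le (neg_le_self (kmRadius_pos hd₁).le),
    intervalIntegral.integral_const_mul, integral_semicircle_quotient (by linarith)
      (kmRadius_pos hd₁) (by linarith) (kmRadius_sq_add_sq hd₁), ENNReal.ofReal_eq_one]
  field_simp
  ring

lemma exists_kestenMcKay_le_smul_volume (hd : 2 ≤ d) :
    ∃ B : ℝ≥0, kestenMcKay d ≤ B • volume.restrict (Icc (-(2 * d : ℝ)) (2 * d)) := by
  have h_cont := (continuousOn_semicircle_quotient (kmRadius_sq_lt hd)).const_mul (d / Real.pi)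
  obtain ⟨B, hB⟩ := isCompact_Icc.bddAbove_image h_cont
  have h_le : kmRadius d ≤ 2 * d := abs_le_of_sq_le_sq' (kmRadius_sq_lt hd).le (by positivity) |>.2
  refine ⟨B.toNNReal, ?_⟩
  rw [kestenMcKay_eq_withDensity_restrict (one_le_two.trans hd)]
  calc _
      ≤ (volume.restrict (Icc (-kmRadius d) (kmRadius d))).withDensity
        fun _ => ENNReal.ofReal B :=
        withDensity_mono (ae_restrict_of_forall_mem measurableSet_Icc fun x hx =>
          ENNReal.ofReal_le_ofReal (hB ⟨x, hx, rfl⟩))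
    _ = B.toNNReal • volume.restrict (Icc (-kmRadius d) (kmRadius d)) := withDensity_const _
    _ ≤ _ := by gcongr

end KestenMcKay

section LogScale

variable {p : ℝ}

lemma three_pow_le_rpow (hp : 0 < p) {a : ℝ} {k : ℕ} (hk : k ≤ a * Real.log p) :
    (3 : ℝ) ^ k ≤ p ^ (2 * a) := by
  have h_exp : (3 : ℝ) ≤ Real.exp 2 := by linarith [Real.add_one_le_exp 2]
  calc (3 : ℝ) ^ k ≤ Real.exp 2 ^ k := by gcongr
    _ = Real.exp (k * 2) := (Real.exp_nat_mul 2 k).symm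
    _ ≤ Real.exp (Real.log p * (2 * a)) := Real.exp_le_exp.mpr (by linarith)
    _ = p ^ (2 * a) := (Real.rpow_def_of_pos hp _).symm

lemma exists_odd_between_log (hp : 2 ≤ p) :
    ∃ n : ℕ, Odd n ∧ Real.log p ≤ n ∧ (n : ℝ) ≤ 4 * Real.log p := by
  have h_log : 1 / 2 < Real.log p :=
    lt_of_lt_of_le (by linarith [Real.log_two_gt_d9]) (Real.log_le_log two_pos hp)
  have h_floor := Nat.floor_le (one_half_pos.trans h_log).le
  refine ⟨2 * ⌊Real.log p⌋₊ + 1, odd_two_mul_add_one _, ?_, ?_⟩ <;> push_cast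
  · linarith [Nat.lt_floor_add_one (Real.log p)]
  · linarith

end LogScale

theorem stmt11_general {μ : Measure ℝ} [IsProbabilityMeasure μ] {L : ℝ} {B : ℝ≥0}
    (hμ : μ ≤ B • volume.restrict (Icc (-L) L)) :
    ∃ α β C : ℝ, 0 < α ∧ 0 < β ∧ 0 < C ∧
      ∀ (p : ℝ), 2 ≤ p →
        ∀ ν : Measure ℝ, IsProbabilityMeasure ν →
          ν (Icc (-L) L)ᶜ = 0 →
          (∀ m : ℕ, 1 ≤ m → (m : ℝ) ≤ α * Real.log p →
            |(∫ x, x ^ m ∂ν) - ∫ x, x ^ m ∂μ| ≤ p ^ (-β)) →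
          discrepancy ν μ ≤ C / Real.log p := by
  set M := max L 1
  have h_sub : Icc (-L) L ⊆ Icc (-M) M :=
    Icc_subset_Icc (neg_le_neg (le_max_left L 1)) (le_max_left L 1)
  have hμM : μ ≤ B • volume.restrict (Icc (-M) M) := hμ.trans (by gcongr)
  refine ⟨24, 49, 2 * (B * (2 * M * 3072) + 768), by norm_num, by norm_num, by positivity,
    fun p hp ν _ hν h_moments => ?_⟩
  have hp₀ : 0 < p := two_pos.trans_le hp
  have h_log : 0 < Real.log p := Real.log_pos (one_lt_two.trans_le hp)
  obtain ⟨n, hn_odd, hn_ge, hn_le⟩ := exists_odd_between_log hp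
  have hn_deg {m : ℕ} (hm : m ≤ 6 * n) : (m : ℝ) ≤ 24 * Real.log p := by
    have : (m : ℝ) ≤ 6 * n := by exact_mod_cast hm
    linarith
  have h_error : p ^ (-49 : ℝ) * 3 ^ (6 * n) ≤ 1 / Real.log p := by
    calc p ^ (-49 : ℝ) * 3 ^ (6 * n) ≤ p ^ (-49 : ℝ) * p ^ (2 * 24 : ℝ) := by
          gcongr; exact three_pow_le_rpow hp₀ (hn_deg le_rfl)
      _ = 1 / p := by rw [← Real.rpow_add hp₀, one_div, ← Real.rpow_neg_one]; norm_num
      _ ≤ 1 / Real.log p := by gcongr; exact Real.log_le_self hp₀.le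
  calc discrepancy ν μ
      ≤ 2 * (B * (2 * M * (3072 / n)) + p ^ (-49 : ℝ) * (768 * 3 ^ (6 * n))) :=
        discrepancy_le_of_moments hn_odd (by positivity) (le_max_right L 1)
          (measure_mono_null (compl_subset_compl.mpr h_sub) hν) hμM fun m hm hm' =>
            h_moments m hm (hn_deg hm')
    _ ≤ 2 * (B * (2 * M * (3072 / Real.log p)) + 768 * (1 / Real.log p)) := by
        rw [mul_left_comm (p ^ (-49 : ℝ))]; gcongr
    _ = 2 * (B * (2 * M * 3072) + 768) / Real.log p := by ring

/-- Fix d ≥ 2. There exist α, β, C > 0 depending only on d such that for every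
real p ≥ 2 and every Borel probability measure ν on ℝ supported in [−2d, 2d], if the m-th
moments of ν and f_{2d} differ by at most p^{−β} for all 1 ≤ m ≤ α·log p, then
D(ν, f_{2d}) ≤ C / log p. -/
theorem stmt11 (d : ℕ) (hd : 2 ≤ d) :
    ∃ α β C : ℝ, 0 < α ∧ 0 < β ∧ 0 < C ∧
      ∀ (p : ℝ), 2 ≤ p →
        ∀ ν : Measure ℝ, IsProbabilityMeasure ν →
          ν (Set.Icc (-(2 * d : ℝ)) (2 * d))ᶜ = 0 →
          (∀ m : ℕ, 1 ≤ m → (m : ℝ) ≤ α * Real.log p →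
            |(∫ x, x ^ m ∂ν) - ∫ x, x ^ m ∂(kestenMcKay d)| ≤ p ^ (-β)) →
          discrepancy ν (kestenMcKay d) ≤ C / Real.log p := by
  have := isProbabilityMeasure_kestenMcKay hd
  exact (exists_kestenMcKay_le_smul_volume hd).elim fun _ hB => stmt11_general hB
end

section
/- Fix an integer d ≥ 2. There exists a constant C > 0 such that for every prime p, every nontrivial irreducible unitary representation π of SL₂(ℤ/pℤ) of dimension d(π), and every integer m with 1 ≤ m ≤ (1/4)·log_{2d}(p), the proportion of tuples S = (g₁, …, g_d) ∈ (SL₂(ℤ/pℤ))^d (with respect to the uniform measure) satisfying |(1/d(π))·tr(A_{π,S}^m) − N(d, m)| ≥ p^{−1/10} is at most C·p^{−1/4}. -/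
open MeasureTheory

/-!
Expanding the power, `tr (A ^ m)` is the sum of the characters of all words of length `m`. The
trivial words contribute `N(d, m)` after division by the dimension, and a word with non-central
value `g` contributes at most `√|C(g)| ≤ √(2p)` by the orthogonality relations. Since the dimension
is at least `(p - 1) / 2`, the sum of the at most `p ^ (1/4)` contributions of the second kind is
negligible.

A nontrivial word is rarely central: multiply each `S i` by the shear of parameter `t` along a
fixed vector `v i`. The value of the word becomes a polynomial in `t` with matrix coefficients
whose leading coefficient is a product of matrices of rank one. As in ping-pong, for all but
`O(1/p)` of the tuples `S` no factor kills the image of the next one, so the leading coefficient has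
rank one, is not scalar, and few `t` give a scalar value. Averaging over `S` removes the shears.

For the dimension, the spectrum of the image of a shear contains with a primitive `p`-th root of
unity `z` all powers `z ^ (a ^ 2)`, because diagonal matrices conjugate a shear to its square
powers.
-/

section Characters

open Representation

variable {G : Type*} [Group G] {n : ℕ} (π : G →* Matrix.unitaryGroup (Fin n) ℂ)

/-- The representation on `ℂⁿ` given by a homomorphism to unitary matrices, which gives access to
the character theory of `Representation`. -/
noncomputable def unitaryRep : Representation ℂ G (Fin n → ℂ) :=
  (Matrix.toLinAlgEquiv' : Matrix (Fin n) (Fin n) ℂ ≃ₐ[ℂ] _).toMonoidHom.comp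
    ((Matrix.unitaryGroup (Fin n) ℂ).subtype.comp π)

lemma character_unitaryRep (g : G) : (unitaryRep π).character g = (π g).1.trace :=
  Matrix.trace_toLin'_eq _

lemma character_unitaryRep_inv (g : G) :
    (unitaryRep π).character g⁻¹ = star ((unitaryRep π).character g) := by
  rw [character_unitaryRep, character_unitaryRep, map_inv, ← Matrix.trace_conjTranspose]
  rfl

variable {π}

lemma IsIrreducibleRep.isIrreducible_unitaryRep [NeZero n] (hπ : IsIrreducibleRep π) :
    (unitaryRep π).IsIrreducible where
  exists_pair_ne := ⟨⊥, ⊤, fun h =>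
    bot_ne_top (α := Submodule ℂ (Fin n → ℂ)) (congrArg Subrepresentation.toSubmodule h)⟩
  eq_bot_or_eq_top W :=
    (hπ W.toSubmodule fun _ _ hv => W.apply_mem_toSubmodule _ hv).imp
      (fun h => Subrepresentation.toSubmodule_injective h)
      (fun h => Subrepresentation.toSubmodule_injective h)

lemma IsIrreducibleRep.sum_norm_trace_sq [Fintype G] [NeZero n] (hπ : IsIrreducibleRep π) :
    ∑ g, ‖(π g).1.trace‖ ^ 2 = Nat.card G := by
  have := hπ.isIrreducible_unitaryRep
  have hG : (Nat.card G : ℂ) ≠ 0 := Nat.cast_ne_zero.2 Nat.card_pos.ne'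
  let : Invertible (Nat.card G : ℂ) := invertibleOfNonzero hG
  have horth := char_orthonormal (unitaryRep π) (unitaryRep π)
  rw [if_pos ⟨Representation.Equiv.refl _⟩, inv_mul_eq_one₀ hG] at horth
  simp only [character_unitaryRep_inv, Complex.star_def, Complex.mul_conj'] at horth
  simp only [character_unitaryRep] at horth
  exact_mod_cast horth.symm

lemma card_mul_le_card_centralizer_mul_sum [Fintype G] {f : G → ℝ} (hf : ∀ g, 0 ≤ f g)
    (hconj : ∀ g h, f (h * g * h⁻¹) = f g) (g : G) :
    Nat.card G * f g ≤ Nat.card (Subgroup.centralizer {g}) * ∑ h, f h := by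
  classical
  have hclass : ∀ h ∈ (MulAction.orbit (ConjAct G) g).toFinset, f h = f g := by
    intro h hh
    obtain ⟨a, rfl⟩ := Set.mem_toFinset.1 hh
    exact hconj g (ConjAct.ofConjAct a)
  have hsum : ((MulAction.orbit (ConjAct G) g).toFinset.card : ℝ) * f g ≤ ∑ h, f h := by
    rw [← nsmul_eq_mul, ← Finset.sum_const, ← Finset.sum_congr rfl hclass]
    exact Finset.sum_le_univ_sum_of_nonneg hf
  have hcard : Nat.card G =
      Nat.card (Subgroup.centralizer {g}) * (MulAction.orbit (ConjAct G) g).toFinset.card := by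
    rw [Subgroup.nat_card_centralizer_nat_card_stabilizer, Set.toFinset_card,
      Nat.card_eq_fintype_card, Nat.card_eq_fintype_card, mul_comm,
      MulAction.card_orbit_mul_card_stabilizer_eq_card_group, ConjAct.card]
  rw [hcard, Nat.cast_mul, mul_assoc]
  exact mul_le_mul_of_nonneg_left hsum (Nat.cast_nonneg _)

lemma IsIrreducibleRep.norm_trace_sq_le [Finite G] [NeZero n] (hπ : IsIrreducibleRep π) (g : G) :
    ‖(π g).1.trace‖ ^ 2 ≤ Nat.card (Subgroup.centralizer {g}) := by
  have := Fintype.ofFinite G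
  have hbound := card_mul_le_card_centralizer_mul_sum (f := fun g => ‖(π g).1.trace‖ ^ 2)
    (fun _ => by positivity)
    (fun g h => by simp only [← character_unitaryRep, char_conj]) g
  rw [hπ.sum_norm_trace_sq, mul_comm] at hbound
  exact le_of_mul_le_mul_right hbound (Nat.cast_pos.2 Nat.card_pos)

end Characters

section Shear

open Matrix
open scoped MatrixGroups

variable {R : Type*} [CommRing R]

/-- The covector `w ↦ det (v, w)` attached to a vector of the plane. -/
def perp (v : Fin 2 → R) : Fin 2 → R := ![-v 1, v 0]

lemma perp_dotProduct (v w : Fin 2 → R) : perp v ⬝ᵥ w = v 0 * w 1 - v 1 * w 0 := by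
  simp [perp, dotProduct, Fin.sum_univ_two]
  ring

lemma perp_dotProduct_self (v : Fin 2 → R) : perp v ⬝ᵥ v = 0 := by
  rw [perp_dotProduct, mul_comm, sub_self]

lemma perp_dotProduct_comm (v w : Fin 2 → R) : perp v ⬝ᵥ w = -(perp w ⬝ᵥ v) := by
  simp only [perp_dotProduct]
  ring

lemma perp_neg (v : Fin 2 → R) : perp (-v) = -perp v := by
  simp [perp]

lemma perp_smul (c : R) (v : Fin 2 → R) : perp (c • v) = c • perp v := by
  simp [perp]

lemma perp_ne_zero {v : Fin 2 → R} (hv : v ≠ 0) : perp v ≠ 0 := by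
  contrapose! hv
  simpa [perp, funext_iff, Fin.forall_fin_two, and_comm] using hv

lemma exists_perp_dotProduct_ne_zero {v : Fin 2 → R} (hv : v ≠ 0) : ∃ w, perp v ⬝ᵥ w ≠ 0 := by
  by_contra! h
  exact perp_ne_zero hv (dotProduct_eq_zero_iff.1 h)

lemma eq_zero_of_perp_dotProduct_eq_zero [NoZeroDivisors R] {u v w : Fin 2 → R}
    (hvw : perp v ⬝ᵥ w ≠ 0) (hv : perp u ⬝ᵥ v = 0) (hw : perp u ⬝ᵥ w = 0) : u = 0 := by
  have hcramer : (perp v ⬝ᵥ w) • u = (perp u ⬝ᵥ w) • v - (perp u ⬝ᵥ v) • w := by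
    refine funext (Fin.forall_fin_two.2 ⟨?_, ?_⟩) <;>
      simp only [Pi.sub_apply, Pi.smul_apply, smul_eq_mul, perp_dotProduct] <;> ring
  rw [hv, hw, zero_smul, zero_smul, sub_zero] at hcramer
  exact (smul_eq_zero.1 hcramer).resolve_left hvw

lemma coe_smul_eq_mulVec (g : SL(2, R)) (v : Fin 2 → R) : g • v = g.1 *ᵥ v := rfl

lemma perp_smul_dotProduct_smul (g : SL(2, R)) (v w : Fin 2 → R) :
    perp (g • v) ⬝ᵥ (g • w) = perp v ⬝ᵥ w := by
  have hdet := g.det_coe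
  rw [det_fin_two] at hdet
  simp only [perp_dotProduct]
  simp only [coe_smul_eq_mulVec, mulVec, dotProduct, Fin.sum_univ_two]
  linear_combination (v 0 * w 1 - v 1 * w 0) * hdet

lemma perp_vecMul_inv (g : SL(2, R)) (v : Fin 2 → R) : perp v ᵥ* g⁻¹.1 = perp (g • v) := by
  refine dotProduct_eq_iff.1 fun w => ?_
  rw [← dotProduct_mulVec, ← coe_smul_eq_mulVec, ← perp_smul_dotProduct_smul g, smul_inv_smul]

/-- The one-parameter group of transvections `w ↦ w + t * det (v, w) • v` fixing `v`. -/
def shear (v : Fin 2 → R) : AddChar R SL(2, R) where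
  toFun t := ⟨1 + t • vecMulVec v (perp v), by
    simp [det_fin_two, perp]
    ring⟩
  map_zero_eq_one' := by
    refine Subtype.ext ?_
    simp
  map_add_eq_mul' s t := by
    refine Subtype.ext ?_
    change 1 + _ = (1 + s • vecMulVec v (perp v)) * (1 + t • vecMulVec v (perp v))
    rw [add_smul, mul_add, mul_one, add_mul, one_mul, Matrix.smul_mul, Matrix.mul_smul,
      vecMulVec_mul_vecMulVec, perp_dotProduct_self, zero_smul, vecMulVec_zero, smul_zero,
      smul_zero, add_zero, add_assoc]

lemma coe_shear (v : Fin 2 → R) (t : R) : (shear v t).1 = 1 + t • vecMulVec v (perp v) := rfl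

lemma shear_smul (v w : Fin 2 → R) (t : R) : shear v t • w = w + (t * (perp v ⬝ᵥ w)) • v := by
  rw [coe_smul_eq_mulVec, coe_shear, add_mulVec, one_mulVec, smul_mulVec, vecMulVec_mulVec,
    op_smul_eq_smul, smul_smul]

lemma subsingleton_setOf_perp_dotProduct_mul_shear_smul [NoZeroDivisors R] {u v w : Fin 2 → R}
    (hu : u ≠ 0) (hvw : perp v ⬝ᵥ w ≠ 0) (g : SL(2, R)) :
    {t | perp u ⬝ᵥ ((g * shear v t) • w) = 0}.Subsingleton := by
  have hline : ∀ t, perp u ⬝ᵥ ((g * shear v t) • w) =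
      perp u ⬝ᵥ (g • w) + t * ((perp v ⬝ᵥ w) * (perp u ⬝ᵥ (g • v))) := by
    intro t
    rw [mul_smul, shear_smul]
    simp only [coe_smul_eq_mulVec, mulVec_add, mulVec_smul, dotProduct_add, dotProduct_smul,
      smul_eq_mul]
    ring
  intro s hs t ht
  by_contra hst
  simp only [Set.mem_ofPred_eq, hline] at hs ht
  have hv : perp u ⬝ᵥ (g • v) = 0 := by
    have hdiff : (s - t) * ((perp v ⬝ᵥ w) * (perp u ⬝ᵥ (g • v))) = 0 := by
      linear_combination hs - ht
    have hprod := (mul_eq_zero.1 hdiff).resolve_left (sub_ne_zero.2 hst)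
    exact (mul_eq_zero.1 hprod).resolve_left hvw
  have hw : perp u ⬝ᵥ (g • w) = 0 := by
    rwa [hv, mul_zero, mul_zero, add_zero] at hs
  refine hu (eq_zero_of_perp_dotProduct_eq_zero ?_ hv hw)
  rwa [perp_smul_dotProduct_smul]

lemma mul_shear_mul_inv (g : SL(2, R)) (v : Fin 2 → R) (t : R) :
    g * shear v t * g⁻¹ = shear (g • v) t := by
  refine Subtype.ext ?_
  have hone : g.1 * g⁻¹.1 = 1 := by
    rw [← Matrix.SpecialLinearGroup.coe_mul, mul_inv_cancel, Matrix.SpecialLinearGroup.coe_one]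
  rw [Matrix.SpecialLinearGroup.coe_mul, Matrix.SpecialLinearGroup.coe_mul, coe_shear, coe_shear,
    mul_add, mul_one, add_mul, hone, Matrix.mul_smul, Matrix.smul_mul, mul_vecMulVec, vecMulVec_mul,
    perp_vecMul_inv, coe_smul_eq_mulVec]

lemma shear_smul_left (c : R) (v : Fin 2 → R) (t : R) : shear (c • v) t = shear v (c ^ 2 * t) := by
  refine Subtype.ext ?_
  rw [coe_shear, coe_shear, perp_smul, smul_vecMulVec, vecMulVec_smul, smul_smul, smul_smul]
  ring_nf

lemma exists_SL2_smul_eq {K : Type*} [Field K] {v w : Fin 2 → K} (hv : v ≠ 0)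
    (hw : w ≠ 0) : ∃ g : SL(2, K), g • v = w := by
  have hcol : ∀ u : Fin 2 → K, u ≠ 0 → ∃ g : SL(2, K), g • Pi.single 0 1 = u := by
    intro u hu
    have hcop : IsCoprime (u 0) (u 1) := by
      rw [Semifield.isCoprime_iff]
      contrapose! hu
      ext i
      fin_cases i
      exacts [hu.1, hu.2]
    obtain ⟨g, h0, h1⟩ := hcop.exists_SL2_col 0
    refine ⟨g, ?_⟩
    ext i
    fin_cases i <;> simpa [coe_smul_eq_mulVec]
  obtain ⟨g, rfl⟩ := hcol v hv
  obtain ⟨h, rfl⟩ := hcol w hw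
  exact ⟨h * g⁻¹, by rw [mul_smul, inv_smul_smul]⟩

lemma exists_transvection_eq_shear {i j : Fin 2} (hij : i ≠ j) (c : R) :
    ∃ s, SpecialLinearGroup.transvection hij c = shear (Pi.single i 1) s := by
  refine ⟨perp (Pi.single i 1) j * c, ?_⟩
  ext k l
  fin_cases i <;> fin_cases j <;> fin_cases k <;> fin_cases l <;>
    simp [SpecialLinearGroup.transvection, transvection, coe_shear, perp] at hij ⊢

lemma eq_top_of_shear_mem {p : ℕ} [Fact p.Prime] {N : Subgroup SL(2, ZMod p)} [N.Normal]
    {v : Fin 2 → ZMod p} (hv : v ≠ 0) (hN : shear v 1 ∈ N) : N = ⊤ := by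
  have hshear : ∀ (w : Fin 2 → ZMod p) (t : ZMod p), w ≠ 0 → shear w t ∈ N := by
    intro w t hw
    obtain ⟨g, rfl⟩ := exists_SL2_smul_eq hv hw
    rw [← mul_shear_mul_inv]
    refine Subgroup.Normal.conj_mem ‹_› _ ?_ g
    rw [← ZMod.natCast_zmod_val t, ← nsmul_one, AddChar.map_nsmul_eq_pow]
    exact pow_mem hN _
  refine eq_top_iff.2 fun g _ => SL2.transvection_induction (· ∈ N) ?_ (fun _ _ => mul_mem) g
  intro i j hij c
  obtain ⟨s, hs⟩ := exists_transvection_eq_shear hij c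
  rw [hs]
  exact hshear _ s (Pi.single_ne_zero_iff.2 one_ne_zero)

end Shear

section Dimension

open Matrix Polynomial
open scoped MatrixGroups

variable {k : Type*} [Field k] {ι : Type*} [Fintype ι] [DecidableEq ι]

lemma exists_mem_spectrum_ne_one [IsAlgClosed k] {M : Matrix ι ι k} {N : ℕ} (hN : (N : k) ≠ 0)
    (hpow : M ^ N = 1) (hM : M ≠ 1) : ∃ z ∈ spectrum k M, z ≠ 1 := by
  have : Nontrivial (Matrix ι ι k) := ⟨M, 1, hM⟩
  by_contra! hone
  set Q : k[X] := ∑ i ∈ Finset.range N, X ^ i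
  have hunit : IsUnit (aeval M Q) := by
    rw [← spectrum.zero_notMem_iff k, spectrum.map_polynomial_aeval_of_nonempty _ _
      (spectrum.nonempty_of_isAlgClosed_of_finiteDimensional k M)]
    rintro ⟨z, hz, hz0⟩
    simp [Q, hone z hz, eval_finsetSum, hN] at hz0
  refine hM (sub_eq_zero.1 (hunit.mul_right_eq_zero.1 ?_))
  simp only [Q, map_sum, map_pow, aeval_X]
  rw [geom_sum_mul, hpow, sub_self]

lemma card_spectrum_le (M : Matrix ι ι k) : (spectrum k M).ncard ≤ Fintype.card ι := by
  classical
  have hroots : spectrum k M = M.charpoly.roots.toFinset := by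
    ext z
    rw [Finset.mem_coe, Multiset.mem_toFinset, mem_roots M.charpoly_monic.ne_zero,
      mem_spectrum_iff_isRoot_charpoly]
  rw [hroots, Set.ncard_coe_finset, ← M.charpoly_natDegree_eq_dim]
  exact (Multiset.toFinset_card_le _).trans (card_roots' _)

variable {p : ℕ} [Fact p.Prime]

lemma isPrimitiveRoot_of_mem_spectrum {A : Type*} [Ring A] [Algebra k A] [Nontrivial A] {a : A}
    (ha : a ^ p = 1) {z : k} (hz : z ∈ spectrum k a) (hz1 : z ≠ 1) : IsPrimitiveRoot z p := by
  have hzp : z ^ p = 1 := by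
    have hmem := spectrum.pow_mem_pow a p hz
    rwa [ha, spectrum.one_eq] at hmem
  exact orderOf_eq_prime hzp hz1 ▸ IsPrimitiveRoot.orderOf z

-- A matrix taking `v` to `a • v` conjugates `shear v 1` to `shear v 1 ^ a²`.
lemma pow_sq_mem_spectrum (ρ : SL(2, ZMod p) →* Matrix ι ι k) {v : Fin 2 → ZMod p} (hv : v ≠ 0)
    {a : ZMod p} (ha : a ≠ 0) {z : k} (hz : z ∈ spectrum k (ρ (shear v 1))) :
    z ^ (a ^ 2).val ∈ spectrum k (ρ (shear v 1)) := by
  obtain ⟨g, hg⟩ := exists_SL2_smul_eq hv (smul_ne_zero ha hv)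
  have hconj : shear v 1 ^ (a ^ 2).val = g * shear v 1 * g⁻¹ := by
    rw [mul_shear_mul_inv, hg, shear_smul_left, mul_one, ← AddChar.map_nsmul_eq_pow, nsmul_one,
      ZMod.natCast_zmod_val]
  have hpow := spectrum.pow_mem_pow (ρ (shear v 1)) (a ^ 2).val hz
  rw [← map_pow, hconj, map_mul, map_mul] at hpow
  exact (spectrum.units_conjugate (u := Units.map ρ (toUnits g))).subset hpow

lemma card_le_two_mul_card_image_sq_add_one {F : Type*} [Field F] [Fintype F] [DecidableEq F] :
    Fintype.card F ≤ 2 * ((Finset.univ.erase (0 : F)).image (· ^ 2)).card + 1 := by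
  have hfib := Finset.card_le_mul_card_image (s := Finset.univ.erase (0 : F)) (f := (· ^ 2)) 2 ?_
  · rw [Finset.card_erase_of_mem (Finset.mem_univ _), Finset.card_univ] at hfib
    omega
  · intro y hy
    obtain ⟨a, -, rfl⟩ := Finset.mem_image.1 hy
    refine (Finset.card_le_card fun b hb => ?_).trans (Finset.card_le_two (a := a) (b := -a))
    rw [Finset.mem_insert, Finset.mem_singleton]
    exact sq_eq_sq_iff_eq_or_eq_neg.1 (Finset.mem_filter.1 hb).2

theorem prime_le_two_mul_card_add_one [IsAlgClosed k] (hp : (p : k) ≠ 0)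
    {ρ : SL(2, ZMod p) →* Matrix ι ι k} (hρ : ∃ g, ρ g ≠ 1) : p ≤ 2 * Fintype.card ι + 1 := by
  classical
  obtain ⟨v, hv⟩ := exists_ne (0 : Fin 2 → ZMod p)
  set T := ρ (shear v 1)
  have hT : T ≠ 1 := by
    intro h
    obtain ⟨g, hg⟩ := hρ
    have htop : ρ.ker = ⊤ := eq_top_of_shear_mem hv h
    exact hg (MonoidHom.mem_ker.1 (htop ▸ Subgroup.mem_top g))
  have hTp : T ^ p = 1 := by
    rw [← map_pow, ← AddChar.map_nsmul_eq_pow, nsmul_one, ZMod.natCast_self,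
      AddChar.map_zero_eq_one, map_one]
  obtain ⟨z, hz, hz1⟩ := exists_mem_spectrum_ne_one hp hTp hT
  have : Nontrivial (Matrix ι ι k) := ⟨T, 1, hT⟩
  have hprim : IsPrimitiveRoot z p := isPrimitiveRoot_of_mem_spectrum hTp hz hz1
  have hcard : ((Finset.univ.erase (0 : ZMod p)).image (· ^ 2)).card ≤ (spectrum k T).ncard := by
    rw [← Set.ncard_coe_finset]
    refine Set.ncard_le_ncard_of_injOn (fun b => z ^ b.val) ?_ ?_ (Matrix.finite_spectrum T)
    · intro b hb
      obtain ⟨a, ha, rfl⟩ := Finset.mem_image.1 hb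
      exact pow_sq_mem_spectrum ρ hv (Finset.ne_of_mem_erase ha) hz
    · intro b _ c _ hbc
      exact ZMod.val_injective p (hprim.pow_inj (ZMod.val_lt b) (ZMod.val_lt c) hbc)
  have hsq := card_le_two_mul_card_image_sq_add_one (F := ZMod p)
  rw [ZMod.card] at hsq
  have hspec := card_spectrum_le T
  omega

end Dimension

section Centralizer

open Matrix
open scoped MatrixGroups

variable {K : Type*} [Field K]

lemma exists_eq_smul_one_add_smul {g h : Matrix (Fin 2) (Fin 2) K} (hg : ∀ r, scalar (Fin 2) r ≠ g)
    (hgh : Commute g h) : ∃ a b : K, h = a • (1 : Matrix (Fin 2) (Fin 2) K) + b • g := by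
  have h00 := congrFun₂ hgh.eq 0 0
  have h01 := congrFun₂ hgh.eq 0 1
  have h10 := congrFun₂ hgh.eq 1 0
  simp only [mul_apply, Fin.sum_univ_two] at h00 h01 h10
  have hentries : g 0 1 ≠ 0 ∨ g 1 0 ≠ 0 ∨ g 0 0 - g 1 1 ≠ 0 := by
    by_contra! hscalar
    refine hg (g 0 0) ?_
    ext i j
    fin_cases i <;> fin_cases j <;> simp [hscalar, sub_eq_zero.1 hscalar.2.2]
  obtain ⟨b, hb⟩ : ∃ b, h 0 1 = b * g 0 1 ∧ h 1 0 = b * g 1 0 ∧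
      h 0 0 - h 1 1 = b * (g 0 0 - g 1 1) := by
    rcases hentries with hne | hne | hne
    · refine ⟨h 0 1 / g 0 1, ?_, ?_, ?_⟩ <;> field_simp <;> grind
    · refine ⟨h 1 0 / g 1 0, ?_, ?_, ?_⟩ <;> field_simp <;> grind
    · refine ⟨(h 0 0 - h 1 1) / (g 0 0 - g 1 1), ?_, ?_, ?_⟩ <;> field_simp <;> grind
  have h11 : h 1 1 = h 0 0 - b * g 0 0 + b * g 1 1 := by linear_combination -hb.2.2
  refine ⟨h 0 0 - b * g 0 0, b, ?_⟩
  ext i j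
  fin_cases i <;> fin_cases j <;> simp [hb, h11]

lemma det_smul_one_add_smul (g : Matrix (Fin 2) (Fin 2) K) (a b : K) :
    (a • (1 : Matrix (Fin 2) (Fin 2) K) + b • g).det = a ^ 2 + g.trace * b * a + g.det * b ^ 2 := by
  simp [det_fin_two, trace_fin_two]
  ring

variable [Finite K]

lemma card_quadratic_eq_le (β γ : K → K) :
    {x : K × K | x.1 ^ 2 + β x.2 * x.1 = γ x.2}.ncard ≤ 2 * Nat.card K := by
  classical
  have := Fintype.ofFinite K
  rw [Set.ncard_eq_toFinset_card', Nat.card_eq_fintype_card]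
  have hfib := Finset.card_le_mul_card_image
    (s := {x : K × K | x.1 ^ 2 + β x.2 * x.1 = γ x.2}.toFinset) (f := Prod.snd) 2 ?_
  · exact hfib.trans (Nat.mul_le_mul_left 2 (Finset.card_le_univ _))
  · intro b hb
    obtain ⟨⟨a, b⟩, hab, rfl⟩ := Finset.mem_image.1 hb
    refine (Finset.card_le_card ?_).trans (Finset.card_le_two (a := (a, b)) (b := (-β b - a, b)))
    rintro ⟨a', b'⟩ ha'
    simp only [Set.mem_toFinset, Set.mem_ofPred_eq, Finset.mem_filter] at ha' hab
    obtain ⟨ha', rfl⟩ := ha'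
    have hfactor : (a' - a) * (a' - (-β b' - a)) = 0 := by linear_combination ha' - hab
    simpa [sub_eq_zero] using hfactor

theorem card_centralizer_le {g : SL(2, K)} (hg : g ∉ Subgroup.center SL(2, K)) :
    Nat.card (Subgroup.centralizer {g}) ≤ 2 * Nat.card K := by
  have hscalar : ∀ r, scalar (Fin 2) r ≠ g.1 := by
    intro r hr
    refine hg (Matrix.SpecialLinearGroup.mem_center_iff.2 ⟨r, ?_, hr⟩)
    rw [← g.det_coe, ← hr, scalar_apply, det_diagonal, Finset.prod_const, Finset.card_univ]
  choose! a b hab using fun h : SL(2, K) => exists_eq_smul_one_add_smul (h := h.1) hscalar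
  have hcomm : ∀ h ∈ Subgroup.centralizer {g}, Commute g.1 h.1 := fun h hh =>
    congrArg Subtype.val (Subgroup.mem_centralizer_singleton_iff.1 hh).symm
  refine le_trans ?_ (card_quadratic_eq_le (fun b => g.1.trace * b) (fun b => 1 - g.1.det * b ^ 2))
  refine Set.ncard_le_ncard_of_injOn (s := Subgroup.centralizer {g}) (fun h => (a h, b h)) ?_ ?_ ?_
  · intro h hh
    have hdet := det_smul_one_add_smul g.1 (a h) (b h)
    rw [← hab h (hcomm h hh), h.det_coe] at hdet
    rw [Set.mem_ofPred_eq]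
    linear_combination -hdet
  · intro h hh h' hh' heq
    obtain ⟨ha, hb⟩ := Prod.mk.inj heq
    exact Subtype.ext (by rw [hab h (hcomm h hh), hab h' (hcomm h' hh'), ha, hb])
  · exact Set.toFinite _

end Centralizer

section Polynomial

open Polynomial

variable {K A : Type*} [Field K] [Ring A] [Algebra K A]

lemma ncard_eval_algebraMap_mem_le (W : Submodule K A) {P : A[X]} {l : ℕ} (hdeg : P.natDegree ≤ l)
    (hcoeff : P.coeff l ∉ W) : {t : K | P.eval (algebraMap K A t) ∈ W}.ncard ≤ l := by
  classical
  obtain ⟨f, hf, hW⟩ := Submodule.exists_le_ker_of_notMem hcoeff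
  set Q : K[X] := ∑ i ∈ Finset.range (l + 1), monomial i (f (P.coeff i))
  have hQ : Q.coeff l ≠ 0 := by
    simpa [Q, coeff_monomial] using hf
  have hQdeg : Q.natDegree ≤ l := natDegree_sum_le_of_forall_le _ _ fun i hi =>
    (natDegree_monomial_le _).trans (Finset.mem_range_succ_iff.1 hi)
  have heval : ∀ t : K, Q.eval t = f (P.eval (algebraMap K A t)) := by
    intro t
    rw [eval_eq_sum_range' (Nat.lt_succ_of_le hdeg), map_sum, eval_finsetSum]
    refine Finset.sum_congr rfl fun i _ => ?_
    rw [eval_monomial, ← map_pow, ← Algebra.commutes, ← Algebra.smul_def, map_smul, smul_eq_mul,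
      mul_comm]
  have hroots : {t : K | P.eval (algebraMap K A t) ∈ W} ⊆ Q.roots.toFinset := by
    intro t ht
    rw [Finset.mem_coe, Multiset.mem_toFinset, mem_roots (ne_of_apply_ne (coeff · l) (by simpa))]
    exact (heval t).trans (hW ht)
  refine (Set.ncard_le_ncard hroots (Finset.finite_toSet _)).trans ?_
  rw [Set.ncard_coe_finset]
  exact (Multiset.toFinset_card_le _).trans ((card_roots' Q).trans hQdeg)

lemma ncard_prod_add_smul_mem_le (W : Submodule K A) {α : Type*} {L : List α} (a b : α → A)
    (hb : (L.map b).prod ∉ W) :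
    {t : K | (L.map fun x => a x + t • b x).prod ∈ W}.ncard ≤ L.length := by
  set factors : List A[X] := L.map fun x => C (a x) + C (b x) * X
  have hfactor : ∀ P ∈ factors, P.natDegree ≤ 1 := by
    intro P hP
    obtain ⟨x, -, rfl⟩ := List.mem_map.1 hP
    rw [add_comm]
    exact natDegree_linear_le
  have hlen : factors.length = L.length := List.length_map _
  have hdeg : factors.prod.natDegree ≤ L.length := by
    refine (natDegree_list_prod_le _).trans ((List.sum_le_card_nsmul _ 1 ?_).trans ?_)
    · simpa using hfactor
    · simp [hlen]
  have hcoeff : factors.prod.coeff L.length = (L.map b).prod := by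
    rw [← hlen, ← mul_one factors.length, coeff_list_prod_of_natDegree_le _ _ hfactor, List.map_map]
    congr 2
    funext x
    simp
  have heval : ∀ t : K, factors.prod.eval (algebraMap K A t) =
      (L.map fun x => a x + t • b x).prod := by
    intro t
    rw [eval, eval₂_list_prod_noncomm _ _ _ fun P _ i => Algebra.commute_algebraMap_right t _,
      List.map_map]
    congr 2
    funext x
    simp [Algebra.smul_def, Algebra.commutes]
  simp only [← heval]
  exact ncard_eval_algebraMap_mem_le W hdeg (hcoeff ▸ hb)

end Polynomial

section Averaging

lemma card_mul_ncard_le_of_forall_ncard_le {T X : Type*} [Finite T] [Finite X]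
    (φ : T → Equiv.Perm X) (P : X → Prop) (B : Set X) (k : ℕ)
    (hP : ∀ x ∉ B, {t | P (φ t x)}.ncard ≤ k) :
    Nat.card T * {x | P x}.ncard ≤ k * Nat.card X + Nat.card T * B.ncard := by
  classical
  have := Fintype.ofFinite T
  have := Fintype.ofFinite X
  have hswap : Nat.card T * {x | P x}.ncard = ∑ x, {t | P (φ t x)}.ncard := by
    have hperm : ∀ t, {x | P (φ t x)}.ncard = {x | P x}.ncard := fun t =>
      Nat.card_congr ((φ t).subtypeEquiv fun _ => Iff.rfl)
    rw [Nat.card_eq_fintype_card, ← smul_eq_mul, ← Finset.card_univ, ← Finset.sum_const,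
      ← Finset.sum_congr rfl fun t _ => hperm t]
    simp only [Set.ncard_eq_toFinset_card', Set.toFinset_ofPred]
    exact Finset.sum_card_bipartiteAbove_eq_sum_card_bipartiteBelow fun t x => P (φ t x)
  calc Nat.card T * {x | P x}.ncard = ∑ x, {t | P (φ t x)}.ncard := hswap
    _ ≤ ∑ x, (k + if x ∈ B then Nat.card T else 0) := Finset.sum_le_sum fun x _ => ?_
    _ = k * Nat.card X + Nat.card T * B.ncard := ?_
  · split_ifs with hx
    · exact (Set.ncard_le_card _).trans (Nat.le_add_left _ _)
    · exact hP x hx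
  · rw [Finset.sum_add_distrib, Finset.sum_const, ← Finset.sum_filter, Finset.sum_const,
      Set.ncard_eq_toFinset_card', ← Set.filter_mem_univ_eq_toFinset,
      smul_eq_mul, smul_eq_mul, mul_comm k, mul_comm (Nat.card T), Finset.card_univ,
      Nat.card_eq_fintype_card (α := X)]

lemma mul_ncard_exists_le {X Y : Type*} [Finite X] [Finite Y] {P : Y → X → Prop} {N c : ℕ}
    (h : ∀ y, N * {x | P y x}.ncard ≤ c) : N * {x | ∃ y, P y x}.ncard ≤ Nat.card Y * c := by
  have := Fintype.ofFinite Y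
  have hunion : {x | ∃ y, P y x}.ncard ≤ ∑ y, {x | P y x}.ncard := by
    rw [Set.ofPred_exists]
    exact Set.ncard_iUnion_le_of_fintype _
  calc N * {x | ∃ y, P y x}.ncard ≤ ∑ y, N * {x | P y x}.ncard :=
        (Nat.mul_le_mul_left N hunion).trans_eq (Finset.mul_sum _ _ _)
    _ ≤ ∑ _y : Y, c := Finset.sum_le_sum fun y _ => h y
    _ = Nat.card Y * c := by simp

end Averaging

section RankOne

open Matrix

variable {K n : Type*} [Field K]

lemma vecMulVec_notMem_span_one [Finite n] [Nontrivial n] [DecidableEq n] {a b : n → K}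
    (ha : a ≠ 0) (hb : b ≠ 0) : vecMulVec a b ∉ Submodule.span K {(1 : Matrix n n K)} := by
  intro hmem
  have := Fintype.ofFinite n
  obtain ⟨r, hr⟩ := Submodule.mem_span_singleton.1 hmem
  have hdet : r ^ Fintype.card n = 0 := by
    rw [← det_vecMulVec a b, ← hr, det_smul, det_one, mul_one]
  rw [pow_eq_zero_iff Fintype.card_ne_zero] at hdet
  rw [hdet, zero_smul, eq_comm, vecMulVec_eq_zero] at hr
  exact hr.elim ha hb

lemma exists_prod_vecMulVec_eq [Fintype n] [DecidableEq n] {α : Type*} {a b : α → n → K}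
    {R : α → α → Prop} (hR : ∀ x y, R x y → b x ⬝ᵥ a y ≠ 0) (hb : ∀ x, b x ≠ 0) {x : α} {L : List α}
    (hL : (x :: L).IsChain R) :
    ∃ c ≠ 0, ((x :: L).map fun y => vecMulVec (a y) (b y)).prod = vecMulVec (a x) c := by
  induction L generalizing x with
  | nil => exact ⟨b x, hb x, by simp⟩
  | cons y L ih =>
    rw [List.isChain_cons_cons] at hL
    obtain ⟨c, hc, hprod⟩ := ih hL.2
    refine ⟨(b x ⬝ᵥ a y) • c, smul_ne_zero (hR x y hL.1) hc, ?_⟩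
    rw [List.map_cons, List.prod_cons, hprod, vecMulVec_mul_vecMulVec]

end RankOne

section Words

open Matrix
open scoped MatrixGroups

/-- The value of a single letter at a tuple `S`; the letter `(i, true)` stands for the `i`-th
generator and `(i, false)` for its inverse, as in `FreeGroup`. -/
def letterEval {G ι : Type*} [Group G] (S : ι → G) (x : ι × Bool) : G :=
  bif x.2 then S x.1 else (S x.1)⁻¹

variable {K ι : Type*} [Field K]

/-- The tuple `S` perturbed along one-parameter groups of shears fixing the vectors `v i`, so that
words in it become polynomials in `t`. -/
def shearTuple (v : ι → Fin 2 → K) (t : K) : Equiv.Perm (ι → SL(2, K)) :=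
  Equiv.mulRight fun i => shear (v i) t

/-- A vector spanning the image of the leading coefficient in `t` of a letter evaluated at
`shearTuple v t S`. -/
def attractor (v : ι → Fin 2 → K) (S : ι → SL(2, K)) (x : ι × Bool) : Fin 2 → K :=
  bif x.2 then S x.1 • v x.1 else v x.1

/-- A vector spanning the kernel of the leading coefficient in `t` of a letter evaluated at
`shearTuple v t S`. -/
def repeller (v : ι → Fin 2 → K) (S : ι → SL(2, K)) (x : ι × Bool) : Fin 2 → K :=
  bif x.2 then v x.1 else -(S x.1 • v x.1)

/-- The ping-pong condition: the repeller of a letter is never parallel to the attractor of a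
letter that may follow it in a reduced word. -/
def InGeneralPosition (v : ι → Fin 2 → K) (S : ι → SL(2, K)) : Prop :=
  ∀ x y : ι × Bool, (x.1 = y.1 → x.2 = y.2) → perp (repeller v S x) ⬝ᵥ attractor v S y ≠ 0

variable {v : ι → Fin 2 → K}

lemma letterEval_shearTuple (S : ι → SL(2, K)) (t : K) (x : ι × Bool) :
    (letterEval (shearTuple v t S) x).1 =
      (letterEval S x).1 + t • vecMulVec (attractor v S x) (perp (repeller v S x)) := by
  obtain ⟨i, _ | _⟩ := x
  · change ((S i * shear (v i) t)⁻¹).1 =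
      (S i)⁻¹.1 + t • vecMulVec (v i) (perp (-(S i • v i)))
    rw [_root_.mul_inv_rev, ← AddChar.map_neg_eq_inv, Matrix.SpecialLinearGroup.coe_mul, coe_shear,
      add_mul, one_mul, Matrix.smul_mul, vecMulVec_mul, perp_vecMul_inv, perp_neg, vecMulVec_neg,
      smul_neg, neg_smul]
  · change (S i * shear (v i) t).1 = (S i).1 + t • vecMulVec (S i • v i) (perp (v i))
    rw [Matrix.SpecialLinearGroup.coe_mul, coe_shear, mul_add, mul_one, Matrix.mul_smul,
      mul_vecMulVec, coe_smul_eq_mulVec]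

lemma repeller_ne_zero (hv : ∀ i, v i ≠ 0) (S : ι → SL(2, K)) (x : ι × Bool) :
    repeller v S x ≠ 0 := by
  obtain ⟨i, _ | _⟩ := x
  · exact neg_ne_zero.2 ((smul_ne_zero_iff_ne _).2 (hv i))
  · exact hv i

lemma attractor_ne_zero (hv : ∀ i, v i ≠ 0) (S : ι → SL(2, K)) (x : ι × Bool) :
    attractor v S x ≠ 0 := by
  obtain ⟨i, _ | _⟩ := x
  · exact hv i
  · exact (smul_ne_zero_iff_ne _).2 (hv i)

lemma coe_mem_span_one_of_mem_center {g : SL(2, K)} (hg : g ∈ Subgroup.center SL(2, K)) :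
    g.1 ∈ Submodule.span K {(1 : Matrix (Fin 2) (Fin 2) K)} := by
  obtain ⟨r, -, hr⟩ := Matrix.SpecialLinearGroup.mem_center_iff.1 hg
  exact Submodule.mem_span_singleton.2 ⟨r, by rw [← hr, smul_one_eq_diagonal, scalar_apply]⟩

lemma InGeneralPosition.ncard_lift_mem_center_le [Finite K] [DecidableEq ι] (hv : ∀ i, v i ≠ 0)
    {S : ι → SL(2, K)} (hS : InGeneralPosition v S) {w : FreeGroup ι} (hw : w ≠ 1) :
    {t | FreeGroup.lift (shearTuple v t S) w ∈ Subgroup.center SL(2, K)}.ncard ≤ w.norm := by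
  obtain ⟨x, L, hxL⟩ := List.exists_cons_of_ne_nil (mt FreeGroup.toWord_eq_nil_iff.1 hw)
  have hchain : (x :: L).IsChain fun a b => a.1 = b.1 → a.2 = b.2 :=
    hxL ▸ FreeGroup.isReduced_toWord
  obtain ⟨c, hc, hlead⟩ := exists_prod_vecMulVec_eq hS
    (fun x => perp_ne_zero (repeller_ne_zero hv S x)) hchain
  have heval : ∀ t, (FreeGroup.lift (shearTuple v t S) w).1 = (w.toWord.map fun x =>
      (letterEval S x).1 + t • vecMulVec (attractor v S x) (perp (repeller v S x))).prod := by
    intro t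
    conv_lhs => rw [← FreeGroup.mk_toWord (x := w), FreeGroup.lift_mk]
    simp only [← letterEval_shearTuple]
    rw [← Matrix.SpecialLinearGroup.coeMonoidHom_apply, map_list_prod, List.map_map]
    rfl
  have hpoly := ncard_prod_add_smul_mem_le (Submodule.span K {(1 : Matrix (Fin 2) (Fin 2) K)})
    (fun x => (letterEval S x).1)
    (fun x => vecMulVec (attractor v S x) (perp (repeller v S x))) (L := w.toWord) (by
      rw [hxL, hlead]
      exact vecMulVec_notMem_span_one (attractor_ne_zero hv S x) hc)
  simp only [← heval] at hpoly
  exact hpoly.trans' (Set.ncard_le_ncard (fun _ => coe_mem_span_one_of_mem_center) (Set.toFinite _))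

lemma card_mul_ncard_perp_dotProduct_smul_eq_zero_le [Finite K] [Finite ι] [DecidableEq ι] (j : ι)
    {w : Fin 2 → K} (hw : w ≠ 0) {u : (ι → SL(2, K)) → Fin 2 → K} (hu : ∀ S, u S ≠ 0)
    (hinv : ∀ S g, u (S * Pi.mulSingle j g) = u S) :
    Nat.card K * {S : ι → SL(2, K) | perp (u S) ⬝ᵥ (S j • w) = 0}.ncard ≤
      Nat.card (ι → SL(2, K)) := by
  obtain ⟨z, hz⟩ := exists_perp_dotProduct_ne_zero hw
  have hz' : perp z ⬝ᵥ w ≠ 0 := by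
    rwa [perp_dotProduct_comm, neg_ne_zero]
  let φ : K → Equiv.Perm (ι → SL(2, K)) := fun t => Equiv.mulRight (Pi.mulSingle j (shear z t))
  have hφ : ∀ S, {t | perp (u (φ t S)) ⬝ᵥ (φ t S j • w) = 0}.ncard ≤ 1 := by
    intro S
    have hcoord : ∀ t, φ t S j = S j * shear z t := fun t =>
      congrArg (S j * ·) (Pi.mulSingle_eq_same j _)
    have hu_φ : ∀ t, u (φ t S) = u S := fun t => hinv S _
    simp only [hcoord, hu_φ]
    exact Set.ncard_le_one_iff_subsingleton.2
      (subsingleton_setOf_perp_dotProduct_mul_shear_smul (hu S) hz' (S j))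
  simpa using card_mul_ncard_le_of_forall_ncard_le φ
    (fun S => perp (u S) ⬝ᵥ (S j • w) = 0) ∅ 1 fun S _ => hφ S

lemma card_mul_ncard_perp_repeller_dotProduct_attractor_le [Finite K] [Finite ι]
    (hv : ∀ i, v i ≠ 0) (hvv : Pairwise fun i j => perp (v i) ⬝ᵥ v j ≠ 0) {x y : ι × Bool}
    (hxy : x.1 = y.1 → x.2 = y.2) :
    Nat.card K * {S : ι → SL(2, K) | perp (repeller v S x) ⬝ᵥ attractor v S y = 0}.ncard ≤
      Nat.card (ι → SL(2, K)) := by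
  classical
  obtain ⟨i, b⟩ := x
  obtain ⟨j, _ | _⟩ := y
  · cases b
    · have hswap : ∀ S, perp (repeller v S (i, false)) ⬝ᵥ attractor v S (j, false) =
          perp (v j) ⬝ᵥ (S i • v i) := by
        intro S
        change perp (-(S i • v i)) ⬝ᵥ v j = _
        rw [perp_neg, neg_dotProduct, perp_dotProduct_comm, neg_neg]
      simp only [hswap]
      exact card_mul_ncard_perp_dotProduct_smul_eq_zero_le i (hv i) (u := fun _ => v j)
        (fun _ => hv j) fun _ _ => rfl
    · have hij : i ≠ j := fun h => Bool.noConfusion (hxy h)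
      have hempty : {_S : ι → SL(2, K) | perp (v i) ⬝ᵥ v j = 0} = ∅ :=
        Set.eq_empty_of_forall_notMem fun _ => hvv hij
      change Nat.card K * {_S : ι → SL(2, K) | perp (v i) ⬝ᵥ v j = 0}.ncard ≤ _
      rw [hempty, Set.ncard_empty, mul_zero]
      exact Nat.zero_le _
  · refine card_mul_ncard_perp_dotProduct_smul_eq_zero_le j (hv j)
      (fun S => repeller_ne_zero hv S (i, b)) fun S g => ?_
    cases b
    · have hij : i ≠ j := fun h => Bool.noConfusion (hxy h)
      change -((S i * Pi.mulSingle (M := fun _ => SL(2, K)) j g i) • v i) = -(S i • v i)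
      rw [Pi.mulSingle_eq_of_ne hij, mul_one]
    · rfl

lemma card_mul_ncard_not_inGeneralPosition_le [Finite K] [Finite ι]
    (hv : ∀ i, v i ≠ 0) (hvv : Pairwise fun i j => perp (v i) ⬝ᵥ v j ≠ 0) :
    Nat.card K * {S | ¬InGeneralPosition v S}.ncard ≤
      4 * Nat.card ι ^ 2 * Nat.card (ι → SL(2, K)) := by
  have hpairs := mul_ncard_exists_le (Y := (ι × Bool) × ι × Bool) (N := Nat.card K)
    (c := Nat.card (ι → SL(2, K)))
    (P := fun xy S => ¬((xy.1.1 = xy.2.1 → xy.1.2 = xy.2.2) →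
      perp (repeller v S xy.1) ⬝ᵥ attractor v S xy.2 ≠ 0)) fun xy => by
        by_cases hxy : xy.1.1 = xy.2.1 → xy.1.2 = xy.2.2
        · simpa only [eq_true hxy, true_imp_iff, ne_eq, not_not] using
            card_mul_ncard_perp_repeller_dotProduct_attractor_le hv hvv hxy
        · simp [hxy]
  have hcard : Nat.card ((ι × Bool) × ι × Bool) = 4 * Nat.card ι ^ 2 := by
    simp only [Nat.card_prod, Nat.card_eq_fintype_card (α := Bool), Fintype.card_bool]
    ring
  simpa only [InGeneralPosition, not_forall, Prod.exists, hcard] using hpairs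

lemma card_mul_ncard_lift_mem_center_le [Finite K] [Finite ι] [DecidableEq ι] {w : FreeGroup ι}
    (hw : w ≠ 1) :
    Nat.card K * {S : ι → SL(2, K) | FreeGroup.lift S w ∈ Subgroup.center SL(2, K)}.ncard ≤
      (w.norm + 4 * Nat.card ι ^ 2) * Nat.card (ι → SL(2, K)) := by
  by_cases hcard : Nat.card ι ≤ Nat.card K
  · obtain ⟨c⟩ : Nonempty (ι ↪ K) := by
      have := Fintype.ofFinite ι
      have := Fintype.ofFinite K
      simpa [Function.Embedding.nonempty_iff_card_le] using hcard
    have hv : ∀ i, (![1, c i] : Fin 2 → K) ≠ 0 := fun i h => one_ne_zero (congrFun h 0)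
    have hvv : Pairwise fun i j => perp ![1, c i] ⬝ᵥ ![1, c j] ≠ 0 := by
      intro i j hij
      rw [perp_dotProduct]
      simpa [sub_eq_zero] using c.injective.ne hij.symm
    rw [add_mul]
    exact (card_mul_ncard_le_of_forall_ncard_le (shearTuple fun i => ![1, c i])
      (fun S => FreeGroup.lift S w ∈ Subgroup.center SL(2, K))
      {S | ¬InGeneralPosition (fun i => ![1, c i]) S} w.norm fun S hS =>
        (not_not.1 hS).ncard_lift_mem_center_le hv hw).trans
      (Nat.add_le_add_left (card_mul_ncard_not_inGeneralPosition_le hv hvv) _)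
  · refine Nat.mul_le_mul ?_ (Set.ncard_le_card _)
    nlinarith

end Words

section Trace

lemma wordProd_eq_mk {d m : ℕ} (w : Fin m → Fin d × Bool) :
    wordProd w = FreeGroup.mk (List.ofFn w) := by
  rw [← FreeGroup.lift_of_apply (FreeGroup.mk (List.ofFn w)), FreeGroup.lift_mk, wordProd,
    List.map_ofFn]
  congr! 3 with j
  rw [Function.comp_apply, Bool.cond_eq_ite]

lemma norm_wordProd_le {d m : ℕ} (w : Fin m → Fin d × Bool) : (wordProd w).norm ≤ m := by
  simpa [wordProd_eq_mk] using FreeGroup.norm_mk_le (L₁ := List.ofFn w)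

lemma wordEval_eq_lift_wordProd {G : Type*} [Group G] {d m : ℕ} (S : Fin d → G)
    (w : Fin m → Fin d × Bool) : wordEval S w = FreeGroup.lift S (wordProd w) := by
  rw [wordProd_eq_mk, FreeGroup.lift_mk, wordEval, List.map_ofFn]
  congr! 3 with j
  rw [Function.comp_apply, Bool.cond_eq_ite]

lemma sum_pow_eq_sum_prod_ofFn {R ι : Type*} [Semiring R] [Fintype ι] (f : ι → R) (m : ℕ) :
    (∑ x, f x) ^ m = ∑ w : Fin m → ι, (List.ofFn fun j => f (w j)).prod := by
  induction m with
  | zero => simp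
  | succ m ih =>
    rw [pow_succ', ih, ← (Fin.consEquiv (fun _ : Fin (m + 1) => ι)).sum_comp,
      Fintype.sum_prod_type, Finset.sum_mul_sum]
    refine Finset.sum_congr rfl fun x _ => Finset.sum_congr rfl fun w _ => ?_
    simp [Fin.consEquiv, List.ofFn_succ]

variable {G : Type*} [Group G] {n d m : ℕ} {π : G →* Matrix.unitaryGroup (Fin n) ℂ}

lemma Amat_eq_sum (π : G →* Matrix.unitaryGroup (Fin n) ℂ) (S : Fin d → G) :
    Amat π S = ∑ x : Fin d × Bool, (π (if x.2 then S x.1 else (S x.1)⁻¹)).1 := by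
  rw [Fintype.sum_prod_type]
  refine Finset.sum_congr rfl fun i _ => ?_
  simp only [Fintype.sum_bool, if_true, Bool.false_eq_true, if_false, map_inv]
  congr 1
  exact Matrix.inv_eq_left_inv (Matrix.UnitaryGroup.star_mul_self _)

lemma trace_Amat_pow (π : G →* Matrix.unitaryGroup (Fin n) ℂ) (S : Fin d → G) (m : ℕ) :
    (Amat π S ^ m).trace = ∑ w : Fin m → Fin d × Bool, (π (wordEval S w)).1.trace := by
  rw [Amat_eq_sum, sum_pow_eq_sum_prod_ofFn, Matrix.trace_sum]
  refine Finset.sum_congr rfl fun w _ => congrArg Matrix.trace ?_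
  rw [wordEval, map_list_prod, List.map_ofFn, SubmonoidClass.coe_list_prod, List.map_ofFn]
  rfl

theorem abs_trace_Amat_pow_div_sub_Ntriv_le [Finite G] [NeZero n] (hπ : IsIrreducibleRep π)
    {S : Fin d → G} {c : ℕ} (hS : ∀ w : Fin m → Fin d × Bool, wordProd w ≠ 1 →
      Nat.card (Subgroup.centralizer {wordEval S w}) ≤ c) :
    |(Amat π S ^ m).trace.re / n - Ntriv d m| ≤ (2 * d) ^ m * (√c / n) := by
  classical
  have hNtriv : (Ntriv d m : ℝ) =
      ∑ w : Fin m → Fin d × Bool, if wordProd w = 1 then (1 : ℝ) else 0 := by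
    rw [Ntriv, Nat.card_eq_fintype_card, Fintype.card_subtype, Finset.sum_boole]
  have hword : ∀ w : Fin m → Fin d × Bool,
      |(π (wordEval S w)).1.trace.re / n - if wordProd w = 1 then 1 else 0| ≤ √c / n := by
    intro w
    split_ifs with hw
    · have htrace : (π (wordEval S w)).1.trace.re = n := by
        simp [wordEval_eq_lift_wordProd, hw]
      rw [htrace, div_self (NeZero.ne _), sub_self, abs_zero]
      positivity
    · rw [sub_zero, abs_div, Nat.abs_cast]
      gcongr
      refine (Complex.abs_re_le_norm _).trans (Real.le_sqrt_of_sq_le ?_)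
      exact (hπ.norm_trace_sq_le _).trans (Nat.cast_le.2 (hS w hw))
  calc |(Amat π S ^ m).trace.re / n - Ntriv d m|
      = |∑ w : Fin m → Fin d × Bool,
          ((π (wordEval S w)).1.trace.re / n - if wordProd w = 1 then 1 else 0)| := by
        rw [hNtriv, trace_Amat_pow, Complex.re_sum, Finset.sum_div, Finset.sum_sub_distrib]
    _ ≤ ∑ w : Fin m → Fin d × Bool,
          |(π (wordEval S w)).1.trace.re / n - if wordProd w = 1 then 1 else 0| :=
        Finset.abs_sum_le_sum_abs _ _
    _ ≤ ∑ _w : Fin m → Fin d × Bool, √c / n := Finset.sum_le_sum fun w _ => hword w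
    _ = (2 * d) ^ m * (√c / n) := by simp [mul_comm]

end Trace

section Deviation

open scoped MatrixGroups

variable {d m p n : ℕ}

lemma card_mul_ncard_exists_wordEval_mem_center_le (K : Type*) [Field K] [Finite K] (d m : ℕ) :
    Nat.card K * {S : Fin d → SL(2, K) | ∃ w : Fin m → Fin d × Bool,
      wordProd w ≠ 1 ∧ wordEval S w ∈ Subgroup.center SL(2, K)}.ncard ≤
        (2 * d) ^ m * ((m + 4 * d ^ 2) * Nat.card (Fin d → SL(2, K))) := by
  refine (mul_ncard_exists_le (c := (m + 4 * d ^ 2) * Nat.card (Fin d → SL(2, K)))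
    fun w => ?_).trans_eq ?_
  · by_cases hw : wordProd w = 1
    · simp [hw]
    · have hcount := card_mul_ncard_lift_mem_center_le (K := K) hw
      simp only [Nat.card_fin, ← wordEval_eq_lift_wordProd] at hcount
      simp only [ne_eq, hw, not_false_eq_true, true_and]
      refine hcount.trans ?_
      gcongr
      exact norm_wordProd_le w
  · simp [mul_comm]

lemma ncard_exists_wordEval_mem_center_div_card_le [Fact p.Prime] (hd : 0 < d)
    (hm : (2 * d : ℝ) ^ m ≤ (p : ℝ) ^ (1 / 4 : ℝ)) :
    ({S : Fin d → SL(2, ZMod p) | ∃ w : Fin m → Fin d × Bool,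
      wordProd w ≠ 1 ∧ wordEval S w ∈ Subgroup.center SL(2, ZMod p)}.ncard : ℝ) /
        Nat.card (Fin d → SL(2, ZMod p)) ≤ (1 + 4 * d ^ 2) * (p : ℝ) ^ (-(1 / 2) : ℝ) := by
  have hp : 0 < (p : ℝ) := Nat.cast_pos.2 (Nat.Prime.pos Fact.out)
  have hX : 0 < (Nat.card (Fin d → SL(2, ZMod p)) : ℝ) := Nat.cast_pos.2 Nat.card_pos
  have hd1 : (1 : ℝ) ≤ d := Nat.one_le_cast.2 hd
  set q := (p : ℝ) ^ (1 / 4 : ℝ)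
  have hq : 1 ≤ q := (one_le_pow₀ (by linarith)).trans hm
  have hmq : (m : ℝ) ≤ q := by
    have hm2 : (m : ℝ) ≤ 2 ^ m := by exact_mod_cast Nat.lt_two_pow_self.le
    exact hm2.trans ((pow_le_pow_left₀ zero_le_two (by linarith) m).trans hm)
  have hqp : q * q = (p : ℝ) ^ (-(1 / 2) : ℝ) * p := by
    rw [← Real.rpow_add hp, ← Real.rpow_add_one hp.ne']
    norm_num
  have hcount := card_mul_ncard_exists_wordEval_mem_center_le (ZMod p) d m
  rw [Nat.card_zmod, ← Nat.cast_le (α := ℝ)] at hcount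
  push_cast at hcount
  rw [div_le_iff₀ hX, ← mul_le_mul_iff_right₀ hp]
  refine hcount.trans ?_
  calc (2 * d : ℝ) ^ m * ((m + 4 * d ^ 2) * Nat.card (Fin d → SL(2, ZMod p)))
      ≤ q * ((q + q * (4 * d ^ 2)) * Nat.card (Fin d → SL(2, ZMod p))) := by
        have hconst : 4 * (d : ℝ) ^ 2 ≤ q * (4 * d ^ 2) := le_mul_of_one_le_left (by positivity) hq
        gcongr
    _ = p * ((1 + 4 * d ^ 2) * (p : ℝ) ^ (-(1 / 2) : ℝ) * Nat.card (Fin d → SL(2, ZMod p))) := by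
        linear_combination (1 + 4 * (d : ℝ) ^ 2) * Nat.card (Fin d → SL(2, ZMod p)) * hqp

lemma eight_div_rpow_lt {x : ℝ} (hx : 0 < x) (hlarge : 32 < x ^ (1 / 4 : ℝ)) :
    8 / x ^ (1 / 4 : ℝ) < x ^ (-(1 / 10) : ℝ) := by
  have height : (8 : ℝ) = 32 ^ (3 / 5 : ℝ) := by
    rw [show (32 : ℝ) = 2 ^ (5 : ℝ) by norm_num, ← Real.rpow_mul zero_le_two]
    norm_num
  rw [div_lt_iff₀ (by positivity), ← Real.rpow_add hx, height]
  calc (32 : ℝ) ^ (3 / 5 : ℝ) < (x ^ (1 / 4 : ℝ)) ^ (3 / 5 : ℝ) := by gcongr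
    _ = x ^ (-(1 / 10) + 1 / 4 : ℝ) := by
      rw [← Real.rpow_mul hx.le]
      norm_num

lemma pow_le_rpow_of_le_mul_logb {b x c : ℝ} (hb : 1 < b) (hx : 0 < x)
    (hm : (m : ℝ) ≤ c * Real.logb b x) : b ^ m ≤ x ^ c := by
  have hb0 : 0 < b := zero_lt_one.trans hb
  calc b ^ m = b ^ (m : ℝ) := (Real.rpow_natCast _ _).symm
    _ ≤ b ^ (c * Real.logb b x) := Real.rpow_le_rpow_of_exponent_le hb.le hm
    _ = x ^ c := by rw [mul_comm, Real.rpow_mul hb0.le, Real.rpow_logb hb0 hb.ne' hx]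

variable [Fact p.Prime] {π : SL 2 p →* Matrix.unitaryGroup (Fin n) ℂ}

lemma prime_div_four_le_dim (hπ : ∃ g, π g ≠ 1) : (p : ℝ) / 4 ≤ n := by
  have hp : 2 ≤ (p : ℝ) := Nat.ofNat_le_cast.2 (Nat.Prime.two_le Fact.out)
  have hdim := prime_le_two_mul_card_add_one (ρ := (Matrix.unitaryGroup (Fin n) ℂ).subtype.comp π)
    (Nat.cast_ne_zero.2 (NeZero.ne p)) (hπ.imp fun g hg h => hg (Subtype.ext h))
  rw [Fintype.card_fin, ← Nat.cast_le (α := ℝ)] at hdim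
  push_cast at hdim
  linarith

lemma sqrt_two_mul_prime_div_le (hπ : ∃ g, π g ≠ 1) : √(2 * p) / n ≤ 8 / √p := by
  have hp : 0 < (p : ℝ) := Nat.cast_pos.2 (Nat.Prime.pos Fact.out)
  calc √(2 * p) / n ≤ (2 * √p) / (p / 4) := by
        gcongr
        · rw [Real.sqrt_mul zero_le_two]
          gcongr
          exact Real.sqrt_le_iff.2 (by norm_num)
        · exact prime_div_four_le_dim hπ
    _ = 8 / √p := by
        nth_rw 2 [← Real.mul_self_sqrt hp.le]
        field_simp
        norm_num

theorem abs_trace_Amat_pow_div_sub_Ntriv_lt (hirr : IsIrreducibleRep π) (hπ : ∃ g, π g ≠ 1)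
    (hm : (2 * d : ℝ) ^ m ≤ (p : ℝ) ^ (1 / 4 : ℝ)) (hlarge : 32 < (p : ℝ) ^ (1 / 4 : ℝ))
    {S : Fin d → SL 2 p} (hS : ∀ w : Fin m → Fin d × Bool, wordProd w ≠ 1 →
      wordEval S w ∉ Subgroup.center (SL 2 p)) :
    |(Amat π S ^ m).trace.re / n - Ntriv d m| < (p : ℝ) ^ (-(1 / 10) : ℝ) := by
  have hp : 0 < (p : ℝ) := Nat.cast_pos.2 (Nat.Prime.pos Fact.out)
  have hn : (0 : ℝ) < n := (by positivity : (0 : ℝ) < p / 4).trans_le (prime_div_four_le_dim hπ)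
  have : NeZero n := ⟨(Nat.cast_pos.1 hn).ne'⟩
  have hsqrt : √(p : ℝ) = (p : ℝ) ^ (1 / 4 : ℝ) * (p : ℝ) ^ (1 / 4 : ℝ) := by
    rw [Real.sqrt_eq_rpow, ← Real.rpow_add hp]
    norm_num
  calc |(Amat π S ^ m).trace.re / n - Ntriv d m| ≤ (2 * d) ^ m * (√(2 * p : ℕ) / n) :=
        abs_trace_Amat_pow_div_sub_Ntriv_le hirr fun w hw =>
          (card_centralizer_le (hS w hw)).trans_eq (by rw [Nat.card_zmod])
    _ ≤ (p : ℝ) ^ (1 / 4 : ℝ) * (8 / √p) := by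
        push_cast
        exact mul_le_mul hm (sqrt_two_mul_prime_div_le hπ) (by positivity) (by positivity)
    _ = 8 / (p : ℝ) ^ (1 / 4 : ℝ) := by
        rw [hsqrt]
        field_simp
    _ < (p : ℝ) ^ (-(1 / 10) : ℝ) := eight_div_rpow_lt hp hlarge

theorem stmt12_general (hd : 0 < d) (hirr : IsIrreducibleRep π) (hπ : ∃ g, π g ≠ 1)
    (hm : (m : ℝ) ≤ 1 / 4 * Real.logb (2 * d) p) :
    (Nat.card {S : Fin d → SL 2 p // (p : ℝ) ^ (-(1 / 10) : ℝ) ≤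
        |(Amat π S ^ m).trace.re / n - Ntriv d m|} : ℝ) / Nat.card (Fin d → SL 2 p) ≤
      (33 + 4 * d ^ 2) * (p : ℝ) ^ (-(1 / 4) : ℝ) := by
  have hp : 1 ≤ (p : ℝ) := Nat.one_le_cast.2 (Nat.Prime.one_le Fact.out)
  have hd1 : (1 : ℝ) ≤ d := Nat.one_le_cast.2 hd
  have hdm : (2 * d : ℝ) ^ m ≤ (p : ℝ) ^ (1 / 4 : ℝ) :=
    pow_le_rpow_of_le_mul_logb (by linarith) (by linarith) hm
  rcases le_or_gt ((p : ℝ) ^ (1 / 4 : ℝ)) 32 with hsmall | hlarge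
  · calc _ ≤ (1 : ℝ) := div_le_one_of_le₀
          (Nat.cast_le.2 (Finite.card_subtype_le _)) (Nat.cast_nonneg _)
      _ ≤ (33 + 4 * d ^ 2) * (p : ℝ) ^ (-(1 / 4) : ℝ) := by
          rw [Real.rpow_neg (by positivity), ← div_eq_mul_inv, one_le_div (by positivity)]
          nlinarith [sq_nonneg (d : ℝ)]
  · have hsub : {S : Fin d → SL 2 p | (p : ℝ) ^ (-(1 / 10) : ℝ) ≤
        |(Amat π S ^ m).trace.re / n - Ntriv d m|} ⊆ {S | ∃ w : Fin m → Fin d × Bool,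
          wordProd w ≠ 1 ∧ wordEval S w ∈ Subgroup.center (SL 2 p)} := by
      intro S hS
      by_contra! hcentral
      exact hS.not_gt (abs_trace_Amat_pow_div_sub_Ntriv_lt hirr hπ hdm hlarge
        fun w hw hmem => hcentral ⟨w, hw, hmem⟩)
    calc _ ≤ _ := div_le_div_of_nonneg_right
          (Nat.cast_le.2 (Set.ncard_le_ncard hsub (Set.toFinite _))) (Nat.cast_nonneg _)
      _ ≤ (1 + 4 * d ^ 2) * (p : ℝ) ^ (-(1 / 2) : ℝ) :=
          ncard_exists_wordEval_mem_center_div_card_le hd hdm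
      _ ≤ (33 + 4 * d ^ 2) * (p : ℝ) ^ (-(1 / 4) : ℝ) := by
          gcongr <;> norm_num

end Deviation

/-- Fix d ≥ 2. There exists C > 0 such that for every prime p, every nontrivial
irreducible unitary representation π of SL₂(ℤ/pℤ) of dimension d(π), and every integer
1 ≤ m ≤ (1/4)·log_{2d}(p), the proportion of tuples S ∈ SL₂(ℤ/pℤ)^d with
|(1/d(π))·tr(A_{π,S}^m) − N(d,m)| ≥ p^{−1/10} is at most C·p^{−1/4}. -/
theorem stmt12 (d : ℕ) (hd : 2 ≤ d) :
    ∃ C : ℝ, 0 < C ∧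
      ∀ (p : ℕ), p.Prime →
        ∀ (dπ : ℕ) (π : SL 2 p →* Matrix.unitaryGroup (Fin dπ) ℂ),
          IsIrreducibleRep π → (∃ g, π g ≠ 1) →
          ∀ m : ℕ, 1 ≤ m → (m : ℝ) ≤ (1/4 : ℝ) * Real.logb (2 * d) p →
          (Nat.card {S : Fin d → SL 2 p //
              (p : ℝ) ^ (-(1/10 : ℝ)) ≤
                |(Amat π S ^ m).trace.re / dπ - (Ntriv d m : ℝ)|} : ℝ) /
            (Nat.card (Fin d → SL 2 p) : ℝ) ≤ C * (p : ℝ) ^ (-(1/4 : ℝ)) := by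
  refine ⟨33 + 4 * d ^ 2, by positivity, fun p hp _ π hirr hπ m _ hm => ?_⟩
  have : Fact p.Prime := ⟨hp⟩
  exact stmt12_general (by lia) hirr hπ hm
end
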